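/- arXiv:2105.08029 — 2 statements merged into one kernel-verified Lean document; each statement's English description precedes it below -/
import Mathlib

section
/- Let 1 < p < ∞, let ω be a radial weight, and let ν : [0,1) → (0,∞) be a measurable function with ν ∈ L¹_ω([0,1)), so that ων is a radial weight. Then the following statements are equivalent: (i) there exists C > 0 such that ‖H_ω(f) + H*_ω(f)‖_{L^p_{ων}} ≤ C ‖f‖_{L^p_{ων}} for every nonnegative f ∈ L^p_{ων}; (ii) there exists C > 0 such that ‖S_{ω₁,rad}(f)‖_{L^p_{ων}} ≤ C ‖f‖_{L^p_{ων}} for every nonnegative f ∈ L^p_{ων}; (iii) there exists C > 0 such that ‖M_{ω₁,rad}(f)‖_{L^p_{ων}} ≤ C ‖f‖_{L^p_{ων}} for every f ∈ L^p_{ων}; (iv) A_p(ω,ων) < ∞. -/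
open MeasureTheory Set Metric
open scoped ENNReal NNReal

noncomputable section

/-- `ω̂(r) = ∫_r^1 ω(s) ds`. -/
def hatw (w : ℝ → ℝ) (r : ℝ) : ℝ := ∫ s in Set.Ioo r 1, w s

/-- `ω̂₁(r) = ∫_r^1 s ω(s) ds`. -/
def hat1 (w : ℝ → ℝ) (r : ℝ) : ℝ := ∫ s in Set.Ioo r 1, s * w s

/-- A radial weight: nonnegative, integrable on `[0,1)`, with `ω̂(r) > 0` for `0 ≤ r < 1`. -/
def IsRadialWeight (w : ℝ → ℝ) : Prop :=
  (∀ r ∈ Set.Ico (0:ℝ) 1, 0 ≤ w r) ∧ MeasureTheory.IntegrableOn w (Set.Ico (0:ℝ) 1) ∧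
    ∀ r ∈ Set.Ico (0:ℝ) 1, 0 < hatw w r

/-- The `L^p_ν` norm (with `dA` = area measure divided by `π`) of a real-valued function on
the unit disc. -/
def LpR (p : ℝ) (v : ℝ → ℝ) (f : ℂ → ℝ) : ℝ≥0∞ :=
  ((∫⁻ z in Metric.ball (0:ℂ) 1, ENNReal.ofReal (|f z| ^ p * v ‖z‖)) /
    ENNReal.ofReal Real.pi) ^ (1 / p)

/-- The `L^p_ν` norm of an `ℝ≥0∞`-valued function on the unit disc. -/
def LpE (p : ℝ) (v : ℝ → ℝ) (g : ℂ → ℝ≥0∞) : ℝ≥0∞ :=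
  ((∫⁻ z in Metric.ball (0:ℂ) 1, g z ^ p * ENNReal.ofReal (v ‖z‖)) /
    ENNReal.ofReal Real.pi) ^ (1 / p)

/-- The averaging operator `H_ω(f)(z) = (1/ω̂₁(|z|)) ∫_{|z|}^1 f(s z/|z|) s ω(s) ds`. -/
def HE (w : ℝ → ℝ) (f : ℂ → ℝ) (z : ℂ) : ℝ≥0∞ :=
  (∫⁻ s in Set.Ioo ‖z‖ 1, ENNReal.ofReal (f ((s / ‖z‖) • z) * (s * w s))) /
    ENNReal.ofReal (hat1 w ‖z‖)

/-- The adjoint `H*_ω(f)(z) = ∫_0^{|z|} f(s z/|z|) s ω(s)/ω̂₁(s) ds`. -/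
def HstarE (w : ℝ → ℝ) (f : ℂ → ℝ) (z : ℂ) : ℝ≥0∞ :=
  ∫⁻ s in Set.Ioo 0 ‖z‖,
    ENNReal.ofReal (f ((s / ‖z‖) • z) * (s * w s)) / ENNReal.ofReal (hat1 w s)

/-- The Stieltjes-type operator
`S_{ω₁,rad}(f)(z) = ∫_0^1 f(s z/|z|) s ω(s)/(ω̂₁(s)+ω̂₁(|z|)) ds`. -/
def SE (w : ℝ → ℝ) (f : ℂ → ℝ) (z : ℂ) : ℝ≥0∞ :=
  ∫⁻ s in Set.Ioo (0:ℝ) 1,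
    ENNReal.ofReal (f ((s / ‖z‖) • z) * (s * w s)) /
      ENNReal.ofReal (hat1 w s + hat1 w ‖z‖)

/-- The Hörmander-type maximal function
`M_{ω₁,rad}(f)(z) = sup_{0 ≤ b < |z|} (1/ω̂₁(b)) ∫_b^1 |f(s z/|z|)| s ω(s) ds`. -/
def MradE (w : ℝ → ℝ) (f : ℂ → ℝ) (z : ℂ) : ℝ≥0∞ :=
  ⨆ b ∈ Set.Ico (0:ℝ) ‖z‖,
    (∫⁻ s in Set.Ioo b 1, ENNReal.ofReal (|f ((s / ‖z‖) • z)| * (s * w s))) /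
      ENNReal.ofReal (hat1 w b)

/-- `A_p(ω,ων) = sup_{0≤r<1} (∫_r¹ s ω ν)^{1/p} (∫_r¹ s ω ν^{-p'/p})^{1/p'} / ω̂₁(r)`,
for a positive function `ν` (note `p' = p/(p-1)` and `1/p' = 1 - 1/p`). -/
def Ap2 (p : ℝ) (w v : ℝ → ℝ) : ℝ≥0∞ :=
  ⨆ r ∈ Set.Ico (0:ℝ) 1,
    (∫⁻ s in Set.Ioo r 1, ENNReal.ofReal (s * w s * v s)) ^ (1 / p) *
      (∫⁻ s in Set.Ioo r 1,
        ENNReal.ofReal (s * w s * v s ^ (-(p / (p - 1)) / p))) ^ (1 - 1 / p) /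
      ENNReal.ofReal (hat1 w r)

lemma lint_prod_le {α β : Type*} [MeasurableSpace α] [MeasurableSpace β] (μ : Measure α)
    (ν : Measure β) [SFinite μ] [SFinite ν] (F : α × β → ℝ≥0∞) :
    ∫⁻ z, F z ∂(μ.prod ν) ≤ ∫⁻ y, ∫⁻ x, F (x, y) ∂μ ∂ν := by
  rw [lintegral]
  refine iSup₂_le fun h hh => ?_
  rw [← SimpleFunc.lintegral_eq_lintegral, lintegral_prod_symm _ h.measurable.aemeasurable]
  exact lintegral_mono fun y => lintegral_mono fun x => hh (x, y)

/-- polar parametrization -/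
def pol (r t : ℝ) : ℂ := Complex.polarCoord.symm (r, t)

lemma norm_pol {r : ℝ} (hr : 0 < r) (t : ℝ) : ‖pol r t‖ = r := by
  rw [pol, Complex.norm_polarCoord_symm, abs_of_pos hr]

lemma smul_pol {r : ℝ} (hr : 0 < r) (s t : ℝ) : (s / r) • pol r t = pol s t := by
  simp only [pol, Complex.polarCoord_symm_apply, Complex.real_smul]
  have : (r : ℂ) ≠ 0 := by exact_mod_cast hr.ne'
  push_cast
  field_simp

lemma meas_pol : Measurable fun z : ℝ × ℝ => pol z.1 z.2 := by
  unfold pol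
  simp only [Complex.polarCoord_symm_apply]
  fun_prop

lemma ball_polar (G : ℂ → ℝ≥0∞) :
    ∫⁻ z in ball (0:ℂ) 1, G z = ∫⁻ z, ENNReal.ofReal z.1 * G (pol z.1 z.2) ∂
      ((volume.restrict (Ioo (0:ℝ) 1)).prod (volume.restrict (Ioo (-Real.pi) Real.pi))) := by
  rw [← lintegral_indicator measurableSet_ball, ← Complex.lintegral_comp_polarCoord_symm,
    Measure.prod_restrict, ← Measure.volume_eq_prod]
  rw [← lintegral_indicator, ← lintegral_indicator]
  · congr 1
    ext ⟨r, t⟩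
    by_cases h : (r, t) ∈ polarCoord.target
    · rw [indicator_of_mem h]
      simp only [polarCoord_target, mem_prod, mem_Ioi] at h
      have e := norm_pol h.1 t
      by_cases hr : r < 1
      · rw [indicator_of_mem (a := (r,t)) (by simp [h.1, hr]; exact h.2)]
        rw [indicator_of_mem]
        · rfl
        · rw [mem_ball_zero_iff]; change ‖pol r t‖ < 1; rw [e]; exact hr
      · rw [indicator_of_notMem, indicator_of_notMem]
        · simp
        · simp [hr]
        · rw [mem_ball_zero_iff]; change ¬ ‖pol r t‖ < 1; rw [e]; exact hr
    · rw [indicator_of_notMem h, indicator_of_notMem]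
      intro h'
      apply h
      simp only [polarCoord_target, mem_prod, mem_Ioi]
      exact ⟨h'.1.1, h'.2⟩
  · exact measurableSet_Ioo.prod measurableSet_Ioo
  · exact polarCoord.open_target.measurableSet

lemma ball_polar_le (G : ℂ → ℝ≥0∞) :
    ∫⁻ z in ball (0:ℂ) 1, G z ≤ ∫⁻ t in Ioo (-Real.pi) Real.pi, ∫⁻ r in Ioo (0:ℝ) 1,
      ENNReal.ofReal r * G (pol r t) := by
  rw [ball_polar]
  exact lint_prod_le _ _ _

lemma ball_polar_eq (G : ℂ → ℝ≥0∞) (hG : Measurable G) :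
    ∫⁻ z in ball (0:ℂ) 1, G z = ∫⁻ t in Ioo (-Real.pi) Real.pi, ∫⁻ r in Ioo (0:ℝ) 1,
      ENNReal.ofReal r * G (pol r t) := by
  rw [ball_polar, lintegral_prod_symm]
  have := hG.comp meas_pol
  exact (Measurable.mul (by fun_prop) this).aemeasurable

/-- maximal function over the tails -/
def Mx (m : Measure ℝ) (g : ℝ → ℝ≥0∞) (r : ℝ) : ℝ≥0∞ :=
  ⨆ b, ⨆ (_ : b < r), (∫⁻ s in Ioi b, g s ∂m) / m (Ioi b)

lemma le_Mx (m : Measure ℝ) (g : ℝ → ℝ≥0∞) {b r : ℝ} (h : b < r) :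
    (∫⁻ s in Ioi b, g s ∂m) / m (Ioi b) ≤ Mx m g r :=
  le_iSup₂ (f := fun b (_ : b < r) => (∫⁻ s in Ioi b, g s ∂m) / m (Ioi b)) b h

lemma Mx_mono (m : Measure ℝ) (g : ℝ → ℝ≥0∞) : Monotone (Mx m g) := by
  intro r r' h
  exact iSup₂_le fun b hb => le_Mx m g (hb.trans_le h)

lemma Mx_meas (m : Measure ℝ) (g : ℝ → ℝ≥0∞) : Measurable (Mx m g) :=
  (Mx_mono m g).measurable

lemma Mx_weak (m : Measure ℝ) [IsFiniteMeasure m] (g : ℝ → ℝ≥0∞) (l : ℝ≥0∞) (hl : l ≠ 0)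
    (hl' : l ≠ ⊤) :
    m {r | l < Mx m g r} ≤ (∫⁻ s, g s ∂m) / l := by
  set U : Set ℝ := {b | l < (∫⁻ s in Ioi b, g s ∂m) / m (Ioi b)} with hU
  have h1 : {r | l < Mx m g r} = ⋃ b ∈ U, Ioi b := by
    ext r
    simp only [mem_ofPred_eq, Mx, lt_iSup_iff, mem_iUnion, mem_Ioi, hU]
    constructor
    · rintro ⟨b, h, h'⟩; exact ⟨b, h', h⟩
    · rintro ⟨b, h, h'⟩; exact ⟨b, h', h⟩
  obtain ⟨T, hT, hTc, hTU⟩ := TopologicalSpace.isOpen_biUnion_countable U (fun b : ℝ => Ioi b)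
    (fun b _ => isOpen_Ioi)
  rw [h1, ← hTU, measure_biUnion_eq_iSup hTc]
  · refine iSup₂_le fun b hb => ?_
    have h2 : l < (∫⁻ s in Ioi b, g s ∂m) / m (Ioi b) := hT hb
    rw [ENNReal.le_div_iff_mul_le (Or.inl hl) (Or.inl hl')]
    have h3 : l * m (Ioi b) ≤ ∫⁻ s in Ioi b, g s ∂m :=
      ENNReal.mul_le_of_le_div h2.le
    rw [mul_comm]
    exact h3.trans (setLIntegral_le_lintegral _ _)
  · intro a ha b hb
    rcases le_total a b with h | h
    · exact ⟨a, ha, Ioi_subset_Ioi le_rfl, Ioi_subset_Ioi h⟩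
    · exact ⟨b, hb, Ioi_subset_Ioi h, Ioi_subset_Ioi le_rfl⟩

lemma Mx_weak2 (m : Measure ℝ) [IsFiniteMeasure m] (g : ℝ → ℝ≥0∞)
    (l : ℝ) (hl : 0 < l) :
    m {r | ENNReal.ofReal (2 * l) < Mx m g r} ≤
      (∫⁻ s, {s | ENNReal.ofReal l < g s}.indicator g s ∂m) / ENNReal.ofReal l := by
  refine le_trans (measure_mono ?_) (Mx_weak m _ (ENNReal.ofReal l) (by simpa using hl)
    (by simp))
  intro r hr
  simp only [mem_ofPred_eq] at hr ⊢
  by_contra hcon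
  push Not at hcon
  refine absurd hr (not_lt.mpr ?_)
  refine iSup₂_le fun b hb => ?_
  have h1 : (∫⁻ s in Ioi b, g s ∂m) ≤
      (∫⁻ s in Ioi b, {s | ENNReal.ofReal l < g s}.indicator g s ∂m)
        + ENNReal.ofReal l * m (Ioi b) := by
    rw [← setLIntegral_const, ← lintegral_add_right _ measurable_const]
    refine lintegral_mono fun s => ?_
    by_cases h : ENNReal.ofReal l < g s
    · rw [indicator_of_mem (by exact h)]; exact le_self_add
    · exact (not_lt.mp h).trans le_add_self
  have h2 : (∫⁻ s in Ioi b, {s | ENNReal.ofReal l < g s}.indicator g s ∂m) ≤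
      ENNReal.ofReal l * m (Ioi b) := by
    have := (le_Mx m _ hb).trans hcon
    by_cases h0 : m (Ioi b) = 0
    · rw [setLIntegral_measure_zero _ _ h0]; exact zero_le
    · rwa [ENNReal.div_le_iff_le_mul (Or.inl h0) (Or.inl (measure_ne_top _ _))] at this
  refine ENNReal.div_le_of_le_mul (h1.trans ?_)
  calc _ ≤ ENNReal.ofReal l * m (Ioi b) + ENNReal.ofReal l * m (Ioi b) := by gcongr
    _ = _ := by rw [ENNReal.ofReal_mul (by norm_num)]; simp; ring

lemma layer (q : ℝ) (hq : 0 < q) (x : ℝ≥0∞) :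
    ∫⁻ l in Ioi (0:ℝ), {l | ENNReal.ofReal l < x}.indicator
      (fun l => ENNReal.ofReal (l ^ (q - 1))) l = x ^ q / ENNReal.ofReal q := by
  have key : ∀ a : ℝ, 0 ≤ a → ∫⁻ l in Ioo (0:ℝ) a, ENNReal.ofReal (l ^ (q - 1)) =
      ENNReal.ofReal (a ^ q / q) := by
    intro a ha
    have h := integral_rpow (a := 0) (b := a) (r := q - 1) (Or.inl (by linarith))
    have hi := intervalIntegral.intervalIntegrable_rpow' (a := 0) (b := a) (r := q - 1)
      (by linarith)
    rw [intervalIntegrable_iff_integrableOn_Ioc_of_le ha] at hi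
    rw [intervalIntegral.integral_of_le ha] at h
    rw [← restrict_Ioo_eq_restrict_Ioc] at h
    rw [← ofReal_integral_eq_lintegral_ofReal, h]
    · simp [Real.zero_rpow hq.ne']
    · exact hi.mono_set Ioo_subset_Ioc_self
    · filter_upwards [ae_restrict_mem measurableSet_Ioo] with l hl
      exact Real.rpow_nonneg hl.1.le _
  by_cases hx : x = ⊤
  · subst hx
    rw [ENNReal.top_rpow_of_pos hq, ENNReal.top_div_of_ne_top (by simp)]
    refine ENNReal.eq_top_of_forall_nnreal_le fun C => ?_
    have hC : (0:ℝ) ≤ (q * C) ^ (1/q) := Real.rpow_nonneg (by positivity) _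
    have := key ((q * C) ^ (1/q)) hC
    rw [← Real.rpow_mul (by positivity), one_div, inv_mul_cancel₀ hq.ne', Real.rpow_one,
      mul_div_cancel_left₀ _ hq.ne', ENNReal.ofReal_coe_nnreal] at this
    rw [← this]
    refine le_trans (lintegral_mono_set (Ioo_subset_Ioi_self)) ?_
    simp
  · lift x to ℝ≥0 using hx
    have := key x x.coe_nonneg
    rw [ENNReal.ofReal_div_of_pos hq, ← ENNReal.ofReal_rpow_of_nonneg x.coe_nonneg hq.le,
      ENNReal.ofReal_coe_nnreal] at this
    rw [← this, setLIntegral_indicator]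
    · congr 2
      ext l
      simp only [mem_inter_iff, mem_ofPred_eq, mem_Ioi, mem_Ioo]
      constructor
      · rintro ⟨h, h0⟩
        refine ⟨h0, ?_⟩
        rwa [← ENNReal.ofReal_coe_nnreal, ENNReal.ofReal_lt_ofReal_iff_of_nonneg h0.le] at h
      · rintro ⟨h0, h⟩
        refine ⟨?_, h0⟩
        rwa [← ENNReal.ofReal_coe_nnreal, ENNReal.ofReal_lt_ofReal_iff_of_nonneg h0.le]
    · exact measurableSet_lt (by fun_prop) measurable_const

lemma Mx_strong (q : ℝ) (hq : 1 < q) : ∃ C : ℝ≥0∞, C ≠ ⊤ ∧ ∀ (m : Measure ℝ)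
    [IsFiniteMeasure m] (g : ℝ → ℝ≥0∞), Measurable g →
    ∫⁻ r, Mx m g r ^ q ∂m ≤ C * ∫⁻ r, g r ^ q ∂m := by
  have hq0 : 0 < q := by linarith
  refine ⟨(2:ℝ≥0∞) ^ q * ENNReal.ofReal q / ENNReal.ofReal (q - 1), ?_, ?_⟩
  · refine ENNReal.div_ne_top (ENNReal.mul_ne_top (by simp) (by simp)) ?_
    simpa using hq
  intro m _ g hg
  have hM := Mx_meas m g
  have hq' : ENNReal.ofReal q ≠ 0 := by simpa using hq0
  have hh : Measurable fun r => Mx m g r / 2 := hM.div_const _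
  have e1 : ∀ r, (Mx m g r) ^ q = 2 ^ q * ENNReal.ofReal q * ((Mx m g r / 2) ^ q / ENNReal.ofReal q) := by
    intro r
    rw [mul_assoc, ENNReal.mul_div_cancel hq' (by simp), ← ENNReal.mul_rpow_of_nonneg _ _ hq0.le,
      ENNReal.mul_div_cancel (by simp) (by simp)]
  simp_rw [e1, ← layer q hq0]
  have mi : ∀ h : ℝ → ℝ≥0∞, Measurable h → Measurable (Function.uncurry fun (r l : ℝ) =>
      {l | ENNReal.ofReal l < h r}.indicator
      (fun l => ENNReal.ofReal (l ^ (q - 1))) l) := by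
    intro h hh
    have : (Function.uncurry fun (r l : ℝ) => {l | ENNReal.ofReal l < h r}.indicator
      (fun l => ENNReal.ofReal (l ^ (q - 1))) l) = {z : ℝ × ℝ | ENNReal.ofReal z.2 < h z.1}.indicator
      (fun z => ENNReal.ofReal (z.2 ^ (q - 1))) := by
      ext ⟨r, l⟩; rfl
    rw [this]
    refine Measurable.indicator (by fun_prop) (measurableSet_lt (by fun_prop) (by fun_prop))
  have hmm : Measurable fun r => ∫⁻ l in Ioi (0:ℝ), {l | ENNReal.ofReal l < Mx m g r / 2}.indicator
      (fun l => ENNReal.ofReal (l ^ (q - 1))) l :=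
    (mi _ hh).lintegral_prod_right' (ν := volume.restrict (Ioi 0))
  rw [lintegral_const_mul _ hmm]
  rw [lintegral_lintegral_swap (mi _ hh).aemeasurable]
  rw [div_eq_mul_inv, mul_assoc (2 ^ q * ENNReal.ofReal q)]
  refine mul_le_mul' le_rfl ?_
  have e2 : ∀ r, (ENNReal.ofReal (q-1))⁻¹ * g r ^ q = ∫⁻ l in Ioi (0:ℝ), {l | ENNReal.ofReal l < g r}.indicator
      (fun l => g r * ENNReal.ofReal (l ^ (q - 1 - 1))) l := by
    intro r
    have : ∀ l, {l | ENNReal.ofReal l < g r}.indicator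
      (fun l => g r * ENNReal.ofReal (l ^ (q - 1 - 1))) l = g r * {l | ENNReal.ofReal l < g r}.indicator
      (fun l => ENNReal.ofReal (l ^ (q - 1 - 1))) l := fun l => by
      by_cases h : ENNReal.ofReal l < g r <;> simp [indicator, h]
    simp_rw [this]
    rw [lintegral_const_mul, layer _ (by linarith), div_eq_mul_inv, mul_comm, ← mul_assoc]
    · congr 1
      nth_rw 2 [← ENNReal.rpow_one (g r)]
      rw [← ENNReal.rpow_add_of_nonneg _ _ (by norm_num) (by linarith)]
      congr 1; ring
    · exact Measurable.indicator (by fun_prop) (measurableSet_lt (by fun_prop) (by fun_prop))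
  rw [← lintegral_const_mul _ (by fun_prop)]
  simp_rw [e2]
  have mi2 : Measurable (Function.uncurry fun (r l : ℝ) =>
      {l | ENNReal.ofReal l < g r}.indicator
      (fun l => g r * ENNReal.ofReal (l ^ (q - 1 - 1))) l) := by
    have : (Function.uncurry fun (r l : ℝ) => {l | ENNReal.ofReal l < g r}.indicator
      (fun l => g r * ENNReal.ofReal (l ^ (q - 1 - 1))) l) = {z : ℝ × ℝ | ENNReal.ofReal z.2 < g z.1}.indicator
      (fun z => g z.1 * ENNReal.ofReal (z.2 ^ (q - 1 - 1))) := by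
      ext ⟨r, l⟩; rfl
    rw [this]
    refine Measurable.indicator (by fun_prop) (measurableSet_lt (by fun_prop) (by fun_prop))
  rw [lintegral_lintegral_swap mi2.aemeasurable]
  refine setLIntegral_mono' measurableSet_Ioi fun l (hl : 0 < l) => ?_
  have e3 : ∀ r, {l | ENNReal.ofReal l < Mx m g r / 2}.indicator
      (fun l => ENNReal.ofReal (l ^ (q - 1))) l = {r | ENNReal.ofReal (2*l) < Mx m g r}.indicator
      (fun _ => ENNReal.ofReal (l ^ (q - 1))) r := by
    intro r
    have : ENNReal.ofReal l < Mx m g r / 2 ↔ ENNReal.ofReal (2*l) < Mx m g r := by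
      rw [ENNReal.lt_div_iff_mul_lt (by simp) (by simp), mul_comm, ENNReal.ofReal_mul (by norm_num)]
      simp
    simp [indicator, this]
  have e4 : ∀ r, {l | ENNReal.ofReal l < g r}.indicator
      (fun l => g r * ENNReal.ofReal (l ^ (q - 1 - 1))) l =
      {s | ENNReal.ofReal l < g s}.indicator g r * ENNReal.ofReal (l ^ (q - 1 - 1)) := fun r => by
      by_cases h : ENNReal.ofReal l < g r <;> simp [indicator, h]
  simp_rw [e3, e4]
  rw [lintegral_mul_const _ (hg.indicator (measurableSet_lt (by fun_prop) hg)),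
    lintegral_indicator_const (measurableSet_lt (by fun_prop) hM)]
  have := Mx_weak2 m g l hl
  calc _ ≤ ENNReal.ofReal (l ^ (q - 1)) * ((∫⁻ s, {s | ENNReal.ofReal l < g s}.indicator g s ∂m) / ENNReal.ofReal l) := by gcongr
    _ = _ := by
      rw [Real.rpow_sub_one hl.ne' (q-1), ENNReal.ofReal_div_of_pos hl, div_eq_mul_inv, div_eq_mul_inv]
      ring

lemma setl_wd (μ : Measure ℝ) (v g : ℝ → ℝ≥0∞) (hv : Measurable v) (hg : Measurable g)
    (b : ℝ) : ∫⁻ s in Ioi b, g s ∂(μ.withDensity v) = ∫⁻ s in Ioi b, v s * g s ∂μ := by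
  rw [setLIntegral_withDensity_eq_setLIntegral_mul _ hv hg measurableSet_Ioi]
  rfl

lemma int_pos (μ : Measure ℝ) (v : ℝ → ℝ≥0∞) (hv : Measurable v) (hv0 : ∀ s, v s ≠ 0) (b : ℝ)
    (hb : μ (Ioi b) ≠ 0) : ∫⁻ s in Ioi b, v s ∂μ ≠ 0 := by
  intro h
  rw [lintegral_eq_zero_iff hv, Filter.EventuallyEq, ae_iff] at h
  apply hb
  simpa [hv0] using h

/-- The standing assumptions for the weighted one-dimensional problem. -/
structure WData (p q : ℝ) (μ : Measure ℝ) (v σ : ℝ → ℝ≥0∞) (A : ℝ≥0∞) : Prop where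
  pq : p.HolderConjugate q
  hv : Measurable v
  hs : Measurable σ
  v0 : ∀ s, v s ≠ 0
  vT : ∀ s, v s ≠ ⊤
  s0 : ∀ s, σ s ≠ 0
  sT : ∀ s, σ s ≠ ⊤
  vs : ∀ s, v s ^ (1/p) * σ s ^ (1/q) = 1
  vI : ∫⁻ s, v s ∂μ ≠ ⊤
  sI : ∫⁻ s, σ s ∂μ ≠ ⊤
  AT : A ≠ ⊤
  hA : ∀ b, (∫⁻ s in Ioi b, v s ∂μ) ^ (1/p) * (∫⁻ s in Ioi b, σ s ∂μ) ^ (1/q) ≤ A * μ (Ioi b)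

lemma WData.symm {p q : ℝ} {μ : Measure ℝ} {v σ : ℝ → ℝ≥0∞} {A : ℝ≥0∞}
    (h : WData p q μ v σ A) : WData q p μ σ v A where
  pq := h.pq.symm
  hv := h.hs
  hs := h.hv
  v0 := h.s0
  vT := h.sT
  s0 := h.v0
  sT := h.vT
  vs := fun s => by rw [mul_comm]; exact h.vs s
  vI := h.sI
  sI := h.vI
  AT := h.AT
  hA := fun b => by rw [mul_comm]; exact h.hA b

lemma WData.vs1 {p q : ℝ} {μ : Measure ℝ} {v σ : ℝ → ℝ≥0∞} {A : ℝ≥0∞}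
    (h : WData p q μ v σ A) (s : ℝ) : v s * σ s ^ (p - 1) = 1 := by
  have h1 := congrArg (· ^ p) (h.vs s)
  simp only [ENNReal.one_rpow] at h1
  rw [ENNReal.mul_rpow_of_nonneg _ _ h.pq.nonneg, ← ENNReal.rpow_mul, ← ENNReal.rpow_mul,
    one_div_mul_cancel h.pq.ne_zero, ENNReal.rpow_one] at h1
  have : 1 / q * p = p - 1 := by rw [← h.pq.div_conj_eq_sub_one]; ring
  rwa [this] at h1

lemma WData.hA1 {p q : ℝ} {μ : Measure ℝ} {v σ : ℝ → ℝ≥0∞} {A : ℝ≥0∞}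
    (h : WData p q μ v σ A) (b : ℝ) : (∫⁻ s in Ioi b, v s ∂μ) * (∫⁻ s in Ioi b, σ s ∂μ) ^ (p - 1)
      ≤ A ^ p * μ (Ioi b) ^ p := by
  have h1 := ENNReal.rpow_le_rpow (h.hA b) h.pq.nonneg
  rw [ENNReal.mul_rpow_of_nonneg _ _ h.pq.nonneg, ENNReal.mul_rpow_of_nonneg _ _ h.pq.nonneg,
    ← ENNReal.rpow_mul, ← ENNReal.rpow_mul,
    one_div_mul_cancel h.pq.ne_zero, ENNReal.rpow_one] at h1
  have : 1 / q * p = p - 1 := by rw [← h.pq.div_conj_eq_sub_one]; ring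
  rwa [this] at h1

lemma ennreal_alg (I W V S A N p : ℝ≥0∞) (W0 : W ≠ 0) (WT : W ≠ ⊤) (S0 : S ≠ 0) (ST : S ≠ ⊤)
    (V0 : V ≠ 0) (VT : V ≠ ⊤) (h : V * S ≤ A * (W * p)) (hN : p * (I * S⁻¹) ≤ N) :
    I * W⁻¹ ≤ A * (N / V) := by
  have h1 : W⁻¹ ≤ A * p * S⁻¹ * V⁻¹ := by
    calc W⁻¹ = W⁻¹ * (V * S) * (V⁻¹ * S⁻¹) := by
          have a1 := ENNReal.mul_inv_cancel V0 VT
          have a2 := ENNReal.mul_inv_cancel S0 ST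
          calc W⁻¹ = W⁻¹ * (V * V⁻¹) * (S * S⁻¹) := by rw [a1, a2]; simp
            _ = _ := by ring
      _ ≤ W⁻¹ * (A * (W * p)) * (V⁻¹ * S⁻¹) := by gcongr
      _ = (W * W⁻¹) * (A * p * S⁻¹ * V⁻¹) := by ring
      _ = _ := by rw [ENNReal.mul_inv_cancel W0 WT, one_mul]
  calc I * W⁻¹ ≤ I * (A * p * S⁻¹ * V⁻¹) := by gcongr
    _ = A * ((p * (I * S⁻¹)) * V⁻¹) := by ring
    _ ≤ A * (N * V⁻¹) := by gcongr
    _ = _ := by rw [div_eq_mul_inv]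

lemma lerner_pt {p q : ℝ} {μ : Measure ℝ} [IsFiniteMeasure μ] {v σ : ℝ → ℝ≥0∞} {A : ℝ≥0∞}
    (h : WData p q μ v σ A) (g : ℝ → ℝ≥0∞) (hg : Measurable g) (b : ℝ) :
    ((∫⁻ s in Ioi b, g s ∂μ) / μ (Ioi b)) ^ (p - 1) ≤
     A ^ p * ((∫⁻ s in Ioi b, (Mx (μ.withDensity σ) (fun s => g s / σ s) s) ^ (p - 1) / v s
        ∂(μ.withDensity v)) / (μ.withDensity v) (Ioi b)) := by
  have hp1 : 0 < p - 1 := h.pq.sub_one_pos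
  by_cases hW : μ (Ioi b) = 0
  · rw [setLIntegral_measure_zero _ _ hW, ENNReal.zero_div, ENNReal.zero_rpow_of_pos hp1]
    exact zero_le
  have hWT : μ (Ioi b) ≠ ⊤ := measure_ne_top _ _
  have mN := Mx_meas (μ.withDensity σ) (fun s => g s / σ s)
  have hV0 := int_pos μ v h.hv h.v0 b hW
  have hS0 := int_pos μ σ h.hs h.s0 b hW
  have hVT : ∫⁻ s in Ioi b, v s ∂μ ≠ ⊤ := ne_top_of_le_ne_top h.vI (setLIntegral_le_lintegral _ _)
  have hST : ∫⁻ s in Ioi b, σ s ∂μ ≠ ⊤ := ne_top_of_le_ne_top h.sI (setLIntegral_le_lintegral _ _)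
  rw [setl_wd μ v _ h.hv (by have := h.hv; fun_prop), withDensity_apply _ measurableSet_Ioi]
  have e1 : ∀ s, v s * (Mx (μ.withDensity σ) (fun s => g s / σ s) s ^ (p - 1) / v s) =
    Mx (μ.withDensity σ) (fun s => g s / σ s) s ^ (p - 1) := fun s =>
      ENNReal.mul_div_cancel (h.v0 s) (h.vT s)
  simp_rw [e1]
  rw [div_eq_mul_inv, ENNReal.mul_rpow_of_nonneg _ _ hp1.le, ENNReal.inv_rpow]
  refine ennreal_alg _ _ _ ((∫⁻ s in Ioi b, σ s ∂μ) ^ (p - 1)) _ _ (μ (Ioi b)) ?_ ?_ ?_ ?_ hV0 hVT ?_ ?_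
  · exact (ENNReal.rpow_pos (pos_iff_ne_zero.mpr hW) hWT).ne'
  · exact ENNReal.rpow_ne_top_of_nonneg hp1.le hWT
  · exact (ENNReal.rpow_pos (pos_iff_ne_zero.mpr hS0) hST).ne'
  · exact ENNReal.rpow_ne_top_of_nonneg hp1.le hST
  · refine (h.hA1 b).trans (le_of_eq ?_)
    congr 1
    nth_rw 3 [← ENNReal.rpow_one (μ (Ioi b))]
    rw [← ENNReal.rpow_add _ _ hW hWT]
    congr 1; ring
  · rw [← ENNReal.inv_rpow, ← ENNReal.mul_rpow_of_nonneg _ _ hp1.le, ← div_eq_mul_inv]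
    rw [mul_comm, ← setLIntegral_const]
    refine setLIntegral_mono' measurableSet_Ioi fun s hs => ?_
    refine ENNReal.rpow_le_rpow ?_ hp1.le
    refine le_trans (le_of_eq ?_) (le_Mx (μ.withDensity σ) (fun s => g s / σ s) hs)
    rw [setl_wd μ σ _ h.hs (by have := h.hs; fun_prop), withDensity_apply _ measurableSet_Ioi]
    have e2 : ∀ s, σ s * (g s / σ s) = g s := fun s => ENNReal.mul_div_cancel (h.s0 s) (h.sT s)
    simp_rw [e2]

lemma lerner {p q : ℝ} (hpq : p.HolderConjugate q) (A : ℝ≥0∞) (hA : A ≠ ⊤) :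
    ∃ C : ℝ≥0∞, C ≠ ⊤ ∧ ∀ (μ : Measure ℝ) [IsFiniteMeasure μ] (v σ : ℝ → ℝ≥0∞),
    WData p q μ v σ A → ∀ g : ℝ → ℝ≥0∞, Measurable g →
    ∫⁻ r, Mx μ g r ^ p * v r ∂μ ≤ C * ∫⁻ r, g r ^ p * v r ∂μ := by
  obtain ⟨C1, hC1, H1⟩ := Mx_strong p hpq.lt
  obtain ⟨C2, hC2, H2⟩ := Mx_strong q hpq.symm.lt
  have hp1 : 0 < p - 1 := hpq.sub_one_pos
  have hpq1 : (p - 1) * q = p := hpq.sub_one_mul_conj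
  refine ⟨(A ^ p) ^ q * (C2 * C1), ENNReal.mul_ne_top ?_ (ENNReal.mul_ne_top hC2 hC1), ?_⟩
  · exact ENNReal.rpow_ne_top_of_nonneg hpq.symm.nonneg (ENNReal.rpow_ne_top_of_nonneg hpq.nonneg hA)
  intro μ _ v σ h g hg
  have hvm := h.hv
  have hsm := h.hs
  set N := Mx (μ.withDensity σ) (fun s => g s / σ s) with hN
  have mN : Measurable N := Mx_meas _ _
  set k : ℝ → ℝ≥0∞ := fun s => N s ^ (p - 1) / v s with hk
  have mk : Measurable k := by fun_prop
  have : IsFiniteMeasure (μ.withDensity v) := isFiniteMeasure_withDensity h.vI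
  have : IsFiniteMeasure (μ.withDensity σ) := isFiniteMeasure_withDensity h.sI
  have hpt : ∀ r, Mx μ g r ≤ (A ^ p * Mx (μ.withDensity v) k r) ^ (1 / (p - 1)) := by
    intro r
    refine iSup₂_le fun b hb => ?_
    rw [one_div, ENNReal.le_rpow_inv_iff hp1]
    refine (lerner_pt h g hg b).trans ?_
    gcongr
    exact le_Mx _ k hb
  have hpt2 : ∀ r, Mx μ g r ^ p * v r ≤ (A ^ p) ^ q * (v r * Mx (μ.withDensity v) k r ^ q) := by
    intro r
    calc Mx μ g r ^ p * v r ≤ ((A ^ p * Mx (μ.withDensity v) k r) ^ (1 / (p - 1))) ^ p * v r := by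
          gcongr
          · exact hpq.nonneg
          · exact hpt r
      _ = (A ^ p * Mx (μ.withDensity v) k r) ^ q * v r := by
          rw [← ENNReal.rpow_mul]
          congr 2
          rw [div_mul_eq_mul_div, one_mul, div_eq_iff hp1.ne', mul_comm, hpq1]
      _ = _ := by rw [ENNReal.mul_rpow_of_nonneg _ _ hpq.symm.nonneg]; ring
  have mMv := Mx_meas (μ.withDensity v) k
  calc ∫⁻ r, Mx μ g r ^ p * v r ∂μ ≤ ∫⁻ r, (A ^ p) ^ q * (v r * Mx (μ.withDensity v) k r ^ q) ∂μ :=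
        lintegral_mono hpt2
    _ = (A ^ p) ^ q * ∫⁻ r, Mx (μ.withDensity v) k r ^ q ∂(μ.withDensity v) := by
        rw [lintegral_const_mul _ (by fun_prop),
          lintegral_withDensity_eq_lintegral_mul _ hvm (by fun_prop)]
        rfl
    _ ≤ (A ^ p) ^ q * (C2 * ∫⁻ r, k r ^ q ∂(μ.withDensity v)) := by
        gcongr; exact H2 _ k mk
    _ = (A ^ p) ^ q * (C2 * ∫⁻ r, N r ^ p ∂(μ.withDensity σ)) := by
        rw [lintegral_withDensity_eq_lintegral_mul _ hvm (by fun_prop),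
          lintegral_withDensity_eq_lintegral_mul _ hsm (by fun_prop)]
        congr 3
        ext s
        simp only [Pi.mul_apply, hk]
        have h1 := h.symm.vs1 s
        have a0 := h.v0 s
        have aT := h.vT s
        rw [div_eq_mul_inv, ENNReal.mul_rpow_of_nonneg _ _ hpq.symm.nonneg, ← ENNReal.rpow_mul, hpq1]
        have h2 : v s * (v s)⁻¹ ^ q = σ s := by
          rw [ENNReal.inv_rpow]
          have e : v s ^ q = v s * v s ^ (q - 1) := by
            nth_rw 2 [← ENNReal.rpow_one (v s)]
            rw [← ENNReal.rpow_add _ _ a0 aT]; congr 1; ring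
          rw [e, ENNReal.mul_inv (Or.inl a0) (Or.inl aT), ← mul_assoc,
            ENNReal.mul_inv_cancel a0 aT, one_mul]
          exact (ENNReal.eq_inv_of_mul_eq_one_left h1).symm
        rw [← h2]; ring
    _ ≤ (A ^ p) ^ q * (C2 * (C1 * ∫⁻ r, (g r / σ r) ^ p ∂(μ.withDensity σ))) := by
        gcongr; exact H1 _ _ (by fun_prop)
    _ = (A ^ p) ^ q * (C2 * (C1 * ∫⁻ r, g r ^ p * v r ∂μ)) := by
        rw [lintegral_withDensity_eq_lintegral_mul _ hsm (by fun_prop)]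
        congr 4
        ext s
        simp only [Pi.mul_apply]
        have h1 := h.vs1 s
        have a0 := h.s0 s
        have aT := h.sT s
        rw [div_eq_mul_inv, ENNReal.mul_rpow_of_nonneg _ _ hpq.nonneg]
        have h2 : σ s * (σ s)⁻¹ ^ p = v s := by
          rw [ENNReal.inv_rpow]
          have e : σ s ^ p = σ s * σ s ^ (p - 1) := by
            nth_rw 2 [← ENNReal.rpow_one (σ s)]
            rw [← ENNReal.rpow_add _ _ a0 aT]; congr 1; ring
          rw [e, ENNReal.mul_inv (Or.inl a0) (Or.inl aT), ← mul_assoc,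
            ENNReal.mul_inv_cancel a0 aT, one_mul]
          exact (ENNReal.eq_inv_of_mul_eq_one_left h1).symm
        rw [← h2]; ring
    _ = _ := by ring

/-- Hardy averaging operator over tails. -/
def Hx (μ : Measure ℝ) (g : ℝ → ℝ≥0∞) (r : ℝ) : ℝ≥0∞ := (∫⁻ s in Ioi r, g s ∂μ) / μ (Ioi r)

/-- Adjoint operator. -/
def Hs (μ : Measure ℝ) (g : ℝ → ℝ≥0∞) (r : ℝ) : ℝ≥0∞ := ∫⁻ s in Iio r, g s / μ (Ioi s) ∂μ

lemma Hx_le_Mx (μ : Measure ℝ) [IsFiniteMeasure μ] [NullSingletonClass μ] (g : ℝ → ℝ≥0∞) (r : ℝ) :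
    Hx μ g r ≤ Mx μ g r := by
  by_cases hT : Mx μ g r = ⊤
  · rw [hT]; exact le_top
  refine ENNReal.div_le_of_le_mul ?_
  have e : μ (Ioi r) = ⨅ n : ℕ, μ (Ioi (r - 1 / (n + 1))) := by
    rw [← measure_congr (Ioi_ae_eq_Ici (μ := μ) (a := r)).symm, ← Antitone.measure_iInter]
    · congr 1
      ext x
      simp only [mem_Ici, mem_iInter, mem_Ioi]
      constructor
      · intro h n
        have : (0:ℝ) < 1 / (n + 1) := by positivity
        linarith
      · intro h
        by_contra hc
        push Not at hc
        obtain ⟨n, hn⟩ := exists_nat_one_div_lt (sub_pos.mpr hc)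
        have := h n
        linarith
    · intro m n hmn
      refine Ioi_subset_Ioi ?_
      have : (1:ℝ) / (n + 1) ≤ 1 / (m + 1) := by gcongr
      linarith
    · exact fun n => measurableSet_Ioi.nullMeasurableSet
    · exact ⟨0, measure_ne_top _ _⟩
  rw [e, ENNReal.mul_iInf (fun h => absurd h hT)]
  refine le_iInf fun n => ?_
  have hn : r - 1 / ((n:ℝ) + 1) < r := by
    have : (0:ℝ) < 1 / (n + 1) := by positivity
    linarith
  have h1 := le_Mx μ g hn
  have h2 : ∫⁻ s in Ioi r, g s ∂μ ≤ ∫⁻ s in Ioi (r - 1 / ((n:ℝ) + 1)), g s ∂μ :=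
    lintegral_mono_set (Ioi_subset_Ioi hn.le)
  refine h2.trans ?_
  by_cases h0 : μ (Ioi (r - 1 / ((n:ℝ) + 1))) = 0
  · rw [setLIntegral_measure_zero _ _ h0]; exact zero_le
  · rwa [ENNReal.div_le_iff_le_mul (Or.inl h0) (Or.inl (measure_ne_top _ _))] at h1

lemma tail_meas (μ : Measure ℝ) : Measurable fun s => μ (Ioi s) :=
  Antitone.measurable fun _ _ h => measure_mono (Ioi_subset_Ioi h)

lemma Hx_meas (μ : Measure ℝ) (g : ℝ → ℝ≥0∞) : Measurable (Hx μ g) := by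
  refine Measurable.div ?_ (tail_meas μ)
  exact Antitone.measurable fun _ _ h => lintegral_mono_set (Ioi_subset_Ioi h)

lemma Hs_meas (μ : Measure ℝ) (g : ℝ → ℝ≥0∞) : Measurable (Hs μ g) :=
  Monotone.measurable fun _ _ h => lintegral_mono_set (Iio_subset_Iio h)

lemma duality (μ : Measure ℝ) [IsFiniteMeasure μ] (g K : ℝ → ℝ≥0∞) (hg : Measurable g)
    (hK : Measurable K) : ∫⁻ r, K r * Hs μ g r ∂μ = ∫⁻ s, g s * Hx μ K s ∂μ := by
  have hW := tail_meas μ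
  have e1 : ∀ r, K r * Hs μ g r = ∫⁻ s, {z : ℝ × ℝ | z.2 < z.1}.indicator
      (fun z => K z.1 * (g z.2 / μ (Ioi z.2))) (r, s) ∂μ := by
    intro r
    rw [Hs, ← lintegral_indicator measurableSet_Iio, ← lintegral_const_mul]
    · congr 1; ext s
      by_cases h : s < r <;> simp [indicator, h]
    · exact Measurable.indicator (hg.div hW) measurableSet_Iio
  have e2 : ∀ s, g s * Hx μ K s = ∫⁻ r, {z : ℝ × ℝ | z.2 < z.1}.indicator
      (fun z => K z.1 * (g z.2 / μ (Ioi z.2))) (r, s) ∂μ := by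
    intro s
    have : g s * Hx μ K s = (g s / μ (Ioi s)) * ∫⁻ r in Ioi s, K r ∂μ := by
      rw [Hx, div_eq_mul_inv, div_eq_mul_inv]; ring
    rw [this, ← lintegral_indicator measurableSet_Ioi, ← lintegral_const_mul]
    · congr 1; ext r
      by_cases h : s < r <;> simp [indicator, h, mul_comm]
    · exact Measurable.indicator (by fun_prop) measurableSet_Ioi
  simp_rw [e1, e2]
  rw [lintegral_lintegral_swap]
  refine Measurable.aemeasurable ?_
  refine Measurable.indicator ?_ (measurableSet_lt (by fun_prop) (by fun_prop))
  have : Measurable fun z : ℝ × ℝ => μ (Ioi z.2) := hW.comp measurable_snd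
  exact (hK.comp measurable_fst).mul ((hg.comp measurable_snd).div this)

lemma Hs_bound {p q : ℝ} (hpq : p.HolderConjugate q) (A : ℝ≥0∞) (hA : A ≠ ⊤) :
    ∃ C : ℝ≥0∞, C ≠ ⊤ ∧ ∀ (μ : Measure ℝ) [IsFiniteMeasure μ] [NullSingletonClass μ] (v σ : ℝ → ℝ≥0∞),
    WData p q μ v σ A → ∀ g : ℝ → ℝ≥0∞, Measurable g →
    ∫⁻ r, Hs μ g r ^ p * v r ∂μ ≤ C * ∫⁻ r, g r ^ p * v r ∂μ := by
  obtain ⟨C, hC, H⟩ := lerner hpq.symm A hA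
  have hp1 : 0 < p - 1 := hpq.sub_one_pos
  have hp0 := hpq.pos
  have hq0 := hpq.symm.pos
  have hpq1 : (p - 1) * q = p := hpq.sub_one_mul_conj
  refine ⟨(C ^ (1/q)) ^ p, ?_, ?_⟩
  · exact ENNReal.rpow_ne_top_of_nonneg hpq.nonneg
      (ENNReal.rpow_ne_top_of_nonneg (by positivity) hC)
  intro μ _ _ v σ h g hg
  have hvm := h.hv
  have hsm := h.hs
  have mHs := Hs_meas μ g
  set Y := ∫⁻ r, g r ^ p * v r ∂μ with hY
  have main : ∀ n : ℕ, ∫⁻ r, (min (Hs μ g r) n) ^ p * v r ∂μ ≤ (C ^ (1/q)) ^ p * Y := by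
    intro n
    set k : ℝ → ℝ≥0∞ := fun r => min (Hs μ g r) n with hk
    have mk : Measurable k := by fun_prop
    set X := ∫⁻ r, k r ^ p * v r ∂μ with hX
    have XT : X ≠ ⊤ := by
      refine ne_top_of_le_ne_top ?_ (lintegral_mono (g := fun r => (n:ℝ≥0∞) ^ p * v r) fun r => ?_)
      · rw [lintegral_const_mul _ hvm]
        exact ENNReal.mul_ne_top (ENNReal.rpow_ne_top_of_nonneg hp0.le (by simp)) h.vI
      · have : k r ≤ n := min_le_right _ _
        dsimp only
        gcongr
    set K : ℝ → ℝ≥0∞ := fun r => k r ^ (p - 1) * v r with hK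
    have mK : Measurable K := by fun_prop
    have mH := Hx_meas μ K
    have s1 : X ≤ ∫⁻ r, K r * Hs μ g r ∂μ := by
      refine lintegral_mono fun r => ?_
      have e : k r ^ p = k r ^ (p - 1) * k r := by
        nth_rw 3 [← ENNReal.rpow_one (k r)]
        rw [← ENNReal.rpow_add_of_nonneg _ _ hp1.le (by norm_num)]; congr 1; ring
      have : k r ≤ Hs μ g r := min_le_left _ _
      calc k r ^ p * v r = K r * k r := by rw [e, hK]; ring
        _ ≤ _ := by gcongr
    rw [duality μ g K hg mK] at s1
    have s2 : ∫⁻ s, g s * Hx μ K s ∂μ ≤ Y ^ (1/p) * (∫⁻ s, Hx μ K s ^ q * σ s ∂μ) ^ (1/q) := by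
      have := ENNReal.lintegral_mul_le_Lp_mul_Lq μ hpq (f := fun s => g s * v s ^ (1/p))
        (g := fun s => Hx μ K s * σ s ^ (1/q)) (by fun_prop) (by fun_prop)
      refine le_trans (le_of_eq ?_) (this.trans (le_of_eq ?_))
      · congr 1; ext s
        simp only [Pi.mul_apply]
        calc g s * Hx μ K s = g s * Hx μ K s * (v s ^ (1/p) * σ s ^ (1/q)) := by
              rw [h.vs s, mul_one]
          _ = _ := by ring
      · congr 3
        · congr 1; ext s
          rw [ENNReal.mul_rpow_of_nonneg _ _ hp0.le, ← ENNReal.rpow_mul,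
            one_div_mul_cancel hp0.ne', ENNReal.rpow_one]
        · ext s
          rw [ENNReal.mul_rpow_of_nonneg _ _ hq0.le, ← ENNReal.rpow_mul,
            one_div_mul_cancel hq0.ne', ENNReal.rpow_one]
    have s3 : ∫⁻ s, Hx μ K s ^ q * σ s ∂μ ≤ C * X := by
      calc _ ≤ ∫⁻ s, Mx μ K s ^ q * σ s ∂μ := by
            refine lintegral_mono fun s => ?_
            have := Hx_le_Mx μ K s
            dsimp only
            gcongr
        _ ≤ C * ∫⁻ s, K s ^ q * σ s ∂μ := H μ σ v h.symm K mK
        _ = C * X := by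
            congr 2; ext s
            have h1 := h.symm.vs1 s
            have e : v s ^ q = v s * v s ^ (q - 1) := by
              nth_rw 2 [← ENNReal.rpow_one (v s)]
              rw [← ENNReal.rpow_add _ _ (h.v0 s) (h.vT s)]; congr 1; ring
            rw [hK]
            dsimp only
            rw [ENNReal.mul_rpow_of_nonneg _ _ hq0.le, ← ENNReal.rpow_mul, hpq1, e]
            calc _ = k s ^ p * v s * (σ s * v s ^ (q - 1)) := by ring
              _ = _ := by rw [h1, mul_one]
    have s4 : X ≤ (C ^ (1/q) * Y ^ (1/p)) * X ^ (1/q) := by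
      refine (s1.trans s2).trans ?_
      calc _ ≤ Y ^ (1/p) * (C * X) ^ (1/q) := by gcongr
        _ = _ := by rw [ENNReal.mul_rpow_of_nonneg _ _ (by positivity)]; ring
    by_cases X0 : X = 0
    · rw [X0]; exact zero_le
    have e : X = X ^ (1/p) * X ^ (1/q) := by
      rw [← ENNReal.rpow_add _ _ X0 XT, one_div, one_div, hpq.inv_add_inv_eq_one, ENNReal.rpow_one]
    have s5 : X ^ (1/p) ≤ C ^ (1/q) * Y ^ (1/p) := by
      nth_rw 1 [e] at s4
      refine (ENNReal.mul_le_mul_iff_left ?_ ?_).mp s4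
      · exact (ENNReal.rpow_pos (pos_iff_ne_zero.mpr X0) XT).ne'
      · exact ENNReal.rpow_ne_top_of_nonneg (by positivity) XT
    have s6 := ENNReal.rpow_le_rpow s5 hp0.le
    rw [ENNReal.mul_rpow_of_nonneg _ _ hp0.le, ← ENNReal.rpow_mul, ← ENNReal.rpow_mul Y,
            one_div_mul_cancel hp0.ne', ENNReal.rpow_one, ENNReal.rpow_one] at s6
    exact s6
  have lim : Filter.Tendsto (fun n : ℕ => ∫⁻ r, (min (Hs μ g r) n) ^ p * v r ∂μ) Filter.atTop
      (nhds (∫⁻ r, Hs μ g r ^ p * v r ∂μ)) := by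
    refine lintegral_tendsto_of_tendsto_of_monotone (fun n => by fun_prop) ?_ ?_
    · refine Filter.Eventually.of_forall fun r m n hmn => ?_
      dsimp only
      gcongr
    · refine Filter.Eventually.of_forall fun r => ?_
      refine ENNReal.Tendsto.mul_const ?_ (Or.inr (h.vT r))
      refine (ENNReal.continuous_rpow_const.tendsto _).comp ?_
      have := (tendsto_const_nhds (x := Hs μ g r)).min ENNReal.tendsto_nat_nhds_top
      simpa using this
  exact le_of_tendsto' lim main

lemma HHs_bound {p q : ℝ} (hpq : p.HolderConjugate q) (A : ℝ≥0∞) (hA : A ≠ ⊤) :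
    ∃ C : ℝ≥0∞, C ≠ ⊤ ∧ ∀ (μ : Measure ℝ) [IsFiniteMeasure μ] [NullSingletonClass μ] (v σ : ℝ → ℝ≥0∞),
    WData p q μ v σ A → ∀ g : ℝ → ℝ≥0∞, Measurable g →
    ∫⁻ r, (Hx μ g r + Hs μ g r) ^ p * v r ∂μ ≤ C * ∫⁻ r, g r ^ p * v r ∂μ := by
  obtain ⟨C1, hC1, H1⟩ := lerner hpq A hA
  obtain ⟨C2, hC2, H2⟩ := Hs_bound hpq A hA
  have hp0 := hpq.pos
  refine ⟨2 ^ (p - 1) * (C1 + C2), ENNReal.mul_ne_top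
    (ENNReal.rpow_ne_top_of_nonneg hpq.sub_one_pos.le (by simp)) (by simp [hC1, hC2]), ?_⟩
  intro μ _ _ v σ h g hg
  have hvm := h.hv
  have mHs := Hs_meas μ g
  have mM := Mx_meas μ g
  calc _ ≤ ∫⁻ r, 2 ^ (p - 1) * (Mx μ g r ^ p * v r + Hs μ g r ^ p * v r) ∂μ := by
        refine lintegral_mono fun r => ?_
        have h1 := Hx_le_Mx μ g r
        dsimp only
        calc _ ≤ (Mx μ g r + Hs μ g r) ^ p * v r := by gcongr
          _ ≤ (2 ^ (p - 1) * (Mx μ g r ^ p + Hs μ g r ^ p)) * v r := by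
              gcongr
              exact ENNReal.rpow_add_le_mul_rpow_add_rpow _ _ hpq.lt.le
          _ = _ := by ring
    _ = 2 ^ (p - 1) * (∫⁻ r, Mx μ g r ^ p * v r ∂μ + ∫⁻ r, Hs μ g r ^ p * v r ∂μ) := by
        rw [lintegral_const_mul _ (by fun_prop), lintegral_add_left (by fun_prop)]
    _ ≤ 2 ^ (p - 1) * (C1 * ∫⁻ r, g r ^ p * v r ∂μ + C2 * ∫⁻ r, g r ^ p * v r ∂μ) := by
        gcongr
        · exact H1 μ v σ h g hg
        · exact H2 μ v σ h g hg
    _ = _ := by ring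

section conn
variable {w v : ℝ → ℝ}

lemma w_aem (hw : IsRadialWeight w) : AEMeasurable w (volume.restrict (Ioo (0:ℝ) 1)) :=
  (hw.2.1.mono_set Ioo_subset_Ico_self).aemeasurable

lemma sw_int (hw : IsRadialWeight w) {r : ℝ} (hr : 0 ≤ r) :
    IntegrableOn (fun s => s * w s) (Ioo r 1) := by
  have h1 : IntegrableOn w (Ioo r 1) :=
    hw.2.1.mono_set fun s hs => ⟨hr.trans hs.1.le, hs.2⟩
  refine Integrable.mono h1 ?_ ?_
  · exact (AEMeasurable.mul (by fun_prop) h1.aemeasurable).aestronglyMeasurable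
  · filter_upwards [ae_restrict_mem measurableSet_Ioo] with s hs
    rw [norm_mul]
    have : ‖s‖ ≤ 1 := by
      rw [Real.norm_eq_abs, abs_le]; constructor <;> linarith [hs.1, hs.2]
    exact mul_le_of_le_one_left (norm_nonneg _) this

lemma sw_nonneg (hw : IsRadialWeight w) {s : ℝ} (hs : 0 ≤ s) (hs1 : s < 1) : 0 ≤ s * w s :=
  mul_nonneg hs (hw.1 s ⟨hs, hs1⟩)

lemma hat1_nonneg (hw : IsRadialWeight w) {r : ℝ} (hr : 0 ≤ r) : 0 ≤ hat1 w r :=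
  setIntegral_nonneg measurableSet_Ioo fun _ hs => sw_nonneg hw (hr.trans hs.1.le) hs.2

lemma hat1_pos (hw : IsRadialWeight w) {r : ℝ} (hr : 0 ≤ r) (hr1 : r < 1) : 0 < hat1 w r := by
  refine lt_of_le_of_ne (hat1_nonneg hw hr) fun h => ?_
  have h1 := hw.2.2 r ⟨hr, hr1⟩
  have h2 : ∀ᵐ s ∂(volume.restrict (Ioo r 1)), 0 ≤ s * w s := by
    filter_upwards [ae_restrict_mem measurableSet_Ioo] with s hs
    exact sw_nonneg hw (hr.trans hs.1.le) hs.2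
  have h3 := (setIntegral_eq_zero_iff_of_nonneg_ae h2 (sw_int hw hr)).mp h.symm
  have h4 : hatw w r = 0 := by
    refine integral_eq_zero_of_ae ?_
    filter_upwards [h3, ae_restrict_mem measurableSet_Ioo] with s hs hs'
    have : s ≠ 0 := (hr.trans_lt hs'.1).ne'
    simpa [this] using hs
  linarith

lemma hat1_anti (hw : IsRadialWeight w) {r s : ℝ} (hr : 0 ≤ r) (hrs : r ≤ s) :
    hat1 w s ≤ hat1 w r := by
  refine setIntegral_mono_set (sw_int hw hr) ?_ (Ioo_subset_Ioo_left hrs).eventuallyLE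
  filter_upwards [ae_restrict_mem measurableSet_Ioo] with s hs
  exact sw_nonneg hw (hr.trans hs.1.le) hs.2

/-- The measure `s ω(s) ds` on `(0,1)`. -/
def mu (w : ℝ → ℝ) : Measure ℝ :=
  (volume.restrict (Ioo (0:ℝ) 1)).withDensity (fun s => ENNReal.ofReal (s * w s))

lemma sw_aem (hw : IsRadialWeight w) :
    AEMeasurable (fun s => ENNReal.ofReal (s * w s)) (volume.restrict (Ioo (0:ℝ) 1)) :=
  (AEMeasurable.mul (by fun_prop) (w_aem hw)).ennreal_ofReal

lemma mu_lint (hw : IsRadialWeight w) (g : ℝ → ℝ≥0∞) (hg : Measurable g) (A : Set ℝ)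
    (hA : MeasurableSet A) :
    ∫⁻ s in A, g s ∂(mu w) = ∫⁻ s in A ∩ Ioo 0 1, ENNReal.ofReal (s * w s) * g s := by
  rw [mu, restrict_withDensity hA, Measure.restrict_restrict hA,
    lintegral_withDensity_eq_lintegral_mul₀ _ hg.aemeasurable]
  · rfl
  · exact (sw_aem hw).mono_measure (Measure.restrict_mono inter_subset_right le_rfl)

lemma mu_Ioi (hw : IsRadialWeight w) (g : ℝ → ℝ≥0∞) (hg : Measurable g) (b : ℝ) :
    ∫⁻ s in Ioi b, g s ∂(mu w) = ∫⁻ s in Ioo (max b 0) 1, ENNReal.ofReal (s * w s) * g s := by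
  rw [mu_lint hw g hg _ measurableSet_Ioi]
  congr 2
  ext s; simp; tauto

lemma mu_univ (hw : IsRadialWeight w) (g : ℝ → ℝ≥0∞) (hg : Measurable g) :
    ∫⁻ s, g s ∂(mu w) = ∫⁻ s in Ioo 0 1, ENNReal.ofReal (s * w s) * g s := by
  rw [← setLIntegral_univ, mu_lint hw g hg _ MeasurableSet.univ, univ_inter]

lemma mu_tail (hw : IsRadialWeight w) (b : ℝ) :
    mu w (Ioi b) = ENNReal.ofReal (hat1 w (max b 0)) := by
  have := mu_Ioi hw 1 measurable_one b
  simp only [Pi.one_apply, mul_one, setLIntegral_const, one_mul] at this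
  rw [this, hat1, ofReal_integral_eq_lintegral_ofReal (sw_int hw (le_max_right _ _))]
  filter_upwards [ae_restrict_mem measurableSet_Ioo] with s hs
  exact sw_nonneg hw ((le_max_right b 0).trans hs.1.le) hs.2

lemma mu_fin (hw : IsRadialWeight w) : IsFiniteMeasure (mu w) := by
  refine isFiniteMeasure_withDensity ?_
  rw [← ofReal_integral_eq_lintegral_ofReal (sw_int hw le_rfl)]
  · simp
  filter_upwards [ae_restrict_mem measurableSet_Ioo] with s hs
  exact sw_nonneg hw hs.1.le hs.2

lemma mu_null (w : ℝ → ℝ) : NullSingletonClass (mu w) :=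
  ⟨fun x => withDensity_absolutelyContinuous _ _ (measure_singleton x)⟩

/-- `v` extended by `1`. -/
def vx (v : ℝ → ℝ) (s : ℝ) : ℝ := (Ico (0:ℝ) 1).piecewise v 1 s

lemma vx_meas (hvm : Measurable v) : Measurable (vx v) :=
  Measurable.piecewise measurableSet_Ico hvm measurable_one

lemma vx_pos (hvpos : ∀ s ∈ Set.Ico (0:ℝ) 1, 0 < v s) (s : ℝ) : 0 < vx v s := by
  by_cases h : s ∈ Ico (0:ℝ) 1
  · rw [vx, piecewise_eq_of_mem _ _ _ h]; exact hvpos s h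
  · rw [vx, piecewise_eq_of_notMem _ _ _ h]; simp

lemma vx_eq {s : ℝ} (h : 0 ≤ s) (h1 : s < 1) : vx v s = v s :=
  piecewise_eq_of_mem _ _ _ ⟨h, h1⟩

lemma V_eq (hw : IsRadialWeight w) (hvm : Measurable v)
    (φ : ℝ → ℝ) (hφ : Measurable φ) (b : ℝ) :
    ∫⁻ s in Ioi b, ENNReal.ofReal (φ (vx v s)) ∂(mu w) =
      ∫⁻ s in Ioo (max b 0) 1, ENNReal.ofReal (s * w s * φ (v s)) := by
  rw [mu_Ioi hw _ (by have := vx_meas hvm; fun_prop)]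
  refine setLIntegral_congr_fun measurableSet_Ioo fun s hs => ?_
  have h0 : 0 ≤ s := (le_max_right b 0).trans hs.1.le
  try dsimp only
  rw [vx_eq h0 hs.2, ENNReal.ofReal_mul (sw_nonneg hw h0 hs.2)]

lemma V_fin (hw : IsRadialWeight w)
    (hvpos : ∀ s ∈ Set.Ico (0:ℝ) 1, 0 < v s)
    (hvL1 : MeasureTheory.IntegrableOn (fun s => v s * w s) (Set.Ico (0:ℝ) 1)) {b : ℝ} (hb : 0 ≤ b) :
    ∫⁻ s in Ioo b 1, ENNReal.ofReal (s * w s * v s) ≠ ⊤ := by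
  refine ne_top_of_le_ne_top (b := ∫⁻ s in Ico 0 1, ENNReal.ofReal (v s * w s)) ?_ ?_
  · exact (Integrable.lintegral_lt_top hvL1).ne
  · refine le_trans (setLIntegral_mono' measurableSet_Ioo
      (g := fun s => ENNReal.ofReal (v s * w s)) fun s hs => ?_) (lintegral_mono_set ?_)
    · have h0 : 0 ≤ s := hb.trans hs.1.le
      have h1 := hw.1 s ⟨h0, hs.2⟩
      have h2 := hvpos s ⟨h0, hs.2⟩
      refine ENNReal.ofReal_le_ofReal ?_
      have h3 : 0 ≤ w s * v s := by positivity
      nlinarith [hs.2]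
    · exact fun s hs => ⟨hb.trans hs.1.le, hs.2⟩

lemma wdata {p : ℝ} (hp : 1 < p) (hw : IsRadialWeight w) (hvm : Measurable v)
    (hvpos : ∀ s ∈ Set.Ico (0:ℝ) 1, 0 < v s)
    (hvL1 : MeasureTheory.IntegrableOn (fun s => v s * w s) (Set.Ico (0:ℝ) 1))
    (hA : Ap2 p w v < ⊤) :
    WData p (p / (p - 1)) (mu w) (fun s => ENNReal.ofReal (vx v s))
      (fun s => ENNReal.ofReal (vx v s ^ (-(p / (p - 1)) / p))) (Ap2 p w v) := by
  have hpq : p.HolderConjugate (p / (p - 1)) := Real.HolderConjugate.conjExponent hp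
  have hp0 := hpq.pos
  have hq0 := hpq.symm.pos
  have hq : 1 / (p / (p - 1)) = 1 - 1 / p := by
    have := hpq.inv_add_inv_eq_one
    rw [one_div, one_div]; linarith
  have := vx_meas hvm
  have vpos := vx_pos hvpos
  have hV := fun b => V_eq hw hvm id measurable_id b
  have hS := fun b => V_eq hw hvm (fun x => x ^ (-(p / (p - 1)) / p)) (by fun_prop) b
  simp only [id] at hV
  have key : ∀ r, 0 ≤ r → r < 1 → (∫⁻ s in Set.Ioo r 1, ENNReal.ofReal (s * w s * v s)) ^ (1 / p) *
      (∫⁻ s in Set.Ioo r 1,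
        ENNReal.ofReal (s * w s * v s ^ (-(p / (p - 1)) / p))) ^ (1 - 1 / p) ≤
        Ap2 p w v * ENNReal.ofReal (hat1 w r) := by
    intro r hr hr1
    have := le_iSup₂ (f := fun r (_ : r ∈ Set.Ico (0:ℝ) 1) =>
      (∫⁻ s in Set.Ioo r 1, ENNReal.ofReal (s * w s * v s)) ^ (1 / p) *
      (∫⁻ s in Set.Ioo r 1,
        ENNReal.ofReal (s * w s * v s ^ (-(p / (p - 1)) / p))) ^ (1 - 1 / p) /
      ENNReal.ofReal (hat1 w r)) r ⟨hr, hr1⟩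
    rw [← ENNReal.div_le_iff_le_mul (Or.inl (by simpa using hat1_pos hw hr hr1)) (Or.inl (by simp))]
    exact this
  have univ_eq : ∀ g : ℝ → ℝ≥0∞, Measurable g → ∫⁻ s, g s ∂(mu w) = ∫⁻ s in Ioi 0, g s ∂(mu w) := by
    intro g hg
    rw [mu_univ hw g hg, mu_Ioi hw g hg, max_self]
  refine ⟨hpq, by fun_prop, by fun_prop, fun s => by simpa using vpos s, fun s => by simp,
    fun s => ?_, fun s => by simp, fun s => ?_, ?_, ?_, hA.ne, fun b => ?_⟩
  · have := Real.rpow_pos_of_pos (vpos s) (-(p / (p - 1)) / p)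
    simpa using this
  · rw [ENNReal.ofReal_rpow_of_pos (vpos s), ENNReal.ofReal_rpow_of_pos (Real.rpow_pos_of_pos (vpos s) _),
      ← Real.rpow_mul (vpos s).le, ← ENNReal.ofReal_mul (Real.rpow_nonneg (vpos s).le _),
      ← Real.rpow_add (vpos s)]
    have : 1 / p + -(p / (p - 1)) / p * (1 / (p / (p - 1))) = 0 := by
      generalize p / (p - 1) = q at hq0
      field_simp; ring
    rw [this]; simp
  · rw [univ_eq _ (by fun_prop), hV]
    exact V_fin hw hvpos hvL1 (le_max_right _ _)
  · rw [univ_eq _ (by fun_prop), hS, max_self]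
    intro hT
    have := key 0 le_rfl one_pos
    have h0 := int_pos (mu w) (fun s => ENNReal.ofReal (vx v s)) (by fun_prop)
      (fun s => by simpa using vpos s) 0 (by
        rw [mu_tail hw, max_self]; simpa using hat1_pos hw le_rfl one_pos)
    rw [hV, max_self] at h0
    have hTV : ∫⁻ s in Ioo 0 1, ENNReal.ofReal (s * w s * v s) ≠ ⊤ := V_fin hw hvpos hvL1 le_rfl
    rw [hT, ENNReal.top_rpow_of_pos (by rw [← hq]; positivity), ENNReal.mul_top
      (ENNReal.rpow_pos (pos_iff_ne_zero.mpr h0) hTV).ne', top_le_iff] at this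
    exact ENNReal.mul_ne_top hA.ne (by simp) this
  · rw [hV, hS, mu_tail hw, hq]
    by_cases hb : max b 0 < 1
    · exact key _ (le_max_right _ _) hb
    · rw [Ioo_eq_empty hb]
      simp only [Measure.restrict_empty, lintegral_zero_measure]
      rw [ENNReal.zero_rpow_of_pos (by positivity), zero_mul]
      exact zero_le

lemma polar_eq (φ : ℝ → ℝ) (hφ : AEMeasurable φ (volume.restrict (Ioo (0:ℝ) 1)))
    (f : ℂ → ℝ≥0∞) (hf : Measurable f) :
    ∫⁻ z in ball (0:ℂ) 1, f z * ENNReal.ofReal (φ ‖z‖) =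
      ∫⁻ t in Ioo (-Real.pi) Real.pi, ∫⁻ r in Ioo (0:ℝ) 1,
        ENNReal.ofReal r * (f (pol r t) * ENNReal.ofReal (φ r)) := by
  rw [ball_polar]
  have : ∀ᵐ z ∂((volume.restrict (Ioo (0:ℝ) 1)).prod (volume.restrict (Ioo (-Real.pi) Real.pi))),
      ENNReal.ofReal z.1 * (f (pol z.1 z.2) * ENNReal.ofReal (φ ‖pol z.1 z.2‖)) =
      ENNReal.ofReal z.1 * (f (pol z.1 z.2) * ENNReal.ofReal (φ z.1)) := by
    rw [Measure.prod_restrict]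
    filter_upwards [ae_restrict_mem (measurableSet_Ioo.prod measurableSet_Ioo)] with z hz
    rw [norm_pol hz.1.1]
  rw [lintegral_congr_ae this, lintegral_prod_symm]
  have h1 := hf.comp meas_pol
  have h2 : AEMeasurable (fun z : ℝ × ℝ => φ z.1)
      ((volume.restrict (Ioo (0:ℝ) 1)).prod (volume.restrict (Ioo (-Real.pi) Real.pi))) :=
    hφ.comp_fst
  exact AEMeasurable.mul (by fun_prop) (h1.aemeasurable.mul h2.ennreal_ofReal)

lemma HE_pol (hw : IsRadialWeight w) (f : ℂ → ℝ) (hf : Measurable f) (hf0 : ∀ z, 0 ≤ f z)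
    {r : ℝ} (hr : 0 < r) (t : ℝ) :
    HE w f (pol r t) = Hx (mu w) (fun s => ENNReal.ofReal (f (pol s t))) r := by
  have m : Measurable fun s => pol s t := meas_pol.comp (measurable_id.prodMk measurable_const)
  rw [HE, Hx, mu_tail hw, mu_Ioi hw (fun s => ENNReal.ofReal (f (pol s t))) (hf.comp m).ennreal_ofReal, norm_pol hr, max_eq_left hr.le]
  congr 2
  ext s
  rw [smul_pol hr, ENNReal.ofReal_mul (hf0 _), mul_comm]

lemma HstarE_pol (hw : IsRadialWeight w) (f : ℂ → ℝ) (hf : Measurable f) (hf0 : ∀ z, 0 ≤ f z)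
    {r : ℝ} (hr : 0 < r) (hr1 : r < 1) (t : ℝ) :
    HstarE w f (pol r t) = Hs (mu w) (fun s => ENNReal.ofReal (f (pol s t))) r := by
  have m : Measurable fun s => pol s t := meas_pol.comp (measurable_id.prodMk measurable_const)
  rw [HstarE, Hs, mu_lint hw (fun s => ENNReal.ofReal (f (pol s t)) / mu w (Ioi s)) ((hf.comp m).ennreal_ofReal.div (tail_meas _)) _ measurableSet_Iio,
    norm_pol hr]
  have : Iio r ∩ Ioo 0 1 = Ioo 0 r := by
    ext s; simp only [mem_inter_iff, mem_Iio, mem_Ioo]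
    constructor
    · rintro ⟨h, h', _⟩; exact ⟨h', h⟩
    · rintro ⟨h, h'⟩; exact ⟨h', h, h'.trans hr1⟩
  rw [this]
  refine setLIntegral_congr_fun measurableSet_Ioo fun s hs => ?_
  try dsimp only
  rw [smul_pol hr, mu_tail hw, max_eq_left hs.1.le, ENNReal.ofReal_mul (hf0 _), mul_comm,
    mul_div_assoc]

lemma wv_aem (hw : IsRadialWeight w) (hvm : Measurable v) :
    AEMeasurable (fun s => w s * v s) (volume.restrict (Ioo (0:ℝ) 1)) :=
  (w_aem hw).mul hvm.aemeasurable

lemma rwv (hw : IsRadialWeight w) {r : ℝ} (h : r ∈ Ioo (0:ℝ) 1) (x : ℝ≥0∞) :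
    ENNReal.ofReal r * (x * ENNReal.ofReal (w r * v r)) =
      ENNReal.ofReal (r * w r) * (x * ENNReal.ofReal (vx v r)) := by
  rw [vx_eq h.1.le h.2, ENNReal.ofReal_mul (hw.1 r ⟨h.1.le, h.2⟩), ENNReal.ofReal_mul h.1.le]
  ring

lemma LpR_int (p : ℝ) (hw : IsRadialWeight w) (hvm : Measurable v) (f : ℂ → ℝ) (hf : Measurable f) :
    ∫⁻ z in ball (0:ℂ) 1, ENNReal.ofReal (|f z| ^ p * (w ‖z‖ * v ‖z‖)) =
      ∫⁻ t in Ioo (-Real.pi) Real.pi, ∫⁻ r, ENNReal.ofReal (|f (pol r t)| ^ p) *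
        ENNReal.ofReal (vx v r) ∂(mu w) := by
  have e : ∀ z, ENNReal.ofReal (|f z| ^ p * (w ‖z‖ * v ‖z‖)) =
      ENNReal.ofReal (|f z| ^ p) * ENNReal.ofReal ((fun s => w s * v s) ‖z‖) := fun z =>
    ENNReal.ofReal_mul (by positivity)
  simp_rw [e]
  rw [polar_eq _ (wv_aem hw hvm) (fun z => ENNReal.ofReal (|f z| ^ p)) (by fun_prop)]
  refine lintegral_congr fun t => ?_
  have m : Measurable fun s => pol s t := meas_pol.comp (measurable_id.prodMk measurable_const)
  have m2 := vx_meas hvm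
  have m3 := hf.comp m
  have m4 : Measurable fun s => |f (pol s t)| ^ p := by
    exact (Measurable.abs m3).pow_const p
  rw [mu_univ hw _ (by fun_prop)]
  refine setLIntegral_congr_fun measurableSet_Ioo fun r hr => ?_
  exact rwv hw hr _

lemma main_i {p : ℝ} (hp : 1 < p) (hw : IsRadialWeight w) (hvm : Measurable v)
    (hvpos : ∀ s ∈ Set.Ico (0:ℝ) 1, 0 < v s)
    (hvL1 : MeasureTheory.IntegrableOn (fun s => v s * w s) (Set.Ico (0:ℝ) 1))
    (hA : Ap2 p w v < ⊤) : ∃ C : ℝ≥0∞, C ≠ ⊤ ∧ ∀ f : ℂ → ℝ, Measurable f → (∀ z, 0 ≤ f z) →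
      ∫⁻ z in ball (0:ℂ) 1, (HE w f z + HstarE w f z) ^ p * ENNReal.ofReal (w ‖z‖ * v ‖z‖) ≤
      C * ∫⁻ z in ball (0:ℂ) 1, ENNReal.ofReal (|f z| ^ p * (w ‖z‖ * v ‖z‖)) := by
  have W := wdata hp hw hvm hvpos hvL1 hA
  have := mu_fin hw
  have := mu_null w
  obtain ⟨C, hC, H⟩ := HHs_bound W.pq (Ap2 p w v) hA.ne
  refine ⟨C, hC, fun f hf hf0 => ?_⟩
  rw [LpR_int p hw hvm f hf, ← lintegral_const_mul' _ _ hC]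
  refine (ball_polar_le _).trans (lintegral_mono fun t => ?_)
  have m : Measurable fun s => pol s t := meas_pol.comp (measurable_id.prodMk measurable_const)
  have mF := (hf.comp m).ennreal_ofReal
  have h1 := H (mu w) _ _ W (fun s => ENNReal.ofReal (f (pol s t))) mF
  have e : ∀ r, ENNReal.ofReal (|f (pol r t)| ^ p) = ENNReal.ofReal (f (pol r t)) ^ p := fun r => by
    rw [abs_of_nonneg (hf0 _), ENNReal.ofReal_rpow_of_nonneg (hf0 _) (by linarith)]
  simp_rw [e]
  refine le_trans (le_of_eq ?_) h1
  have m2 := vx_meas hvm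
  have m3 := Hx_meas (mu w) (fun s => ENNReal.ofReal (f (pol s t)))
  have m4 := Hs_meas (mu w) (fun s => ENNReal.ofReal (f (pol s t)))
  rw [mu_univ hw _ (by fun_prop)]
  refine setLIntegral_congr_fun measurableSet_Ioo fun r hr => ?_
  try dsimp only
  rw [HE_pol hw f hf hf0 hr.1, HstarE_pol hw f hf hf0 hr.1 hr.2, norm_pol hr.1]
  exact rwv hw hr _

lemma SE_le (hw : IsRadialWeight w) (f : ℂ → ℝ) (z : ℂ) (hz : ‖z‖ < 1) :
    SE w f z ≤ HE w f z + HstarE w f z := by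
  set r := ‖z‖ with hr
  have hr0 : 0 ≤ r := norm_nonneg _
  have hsub : Ioo (0:ℝ) 1 ⊆ Ioo r 1 ∪ Ioc 0 r := by
    intro s hs
    rcases lt_or_ge r s with h | h
    · exact Or.inl ⟨h, hs.2⟩
    · exact Or.inr ⟨hs.1, h⟩
  unfold SE
  refine (lintegral_mono_set hsub).trans ((lintegral_union_le _ _ _).trans (add_le_add ?_ ?_))
  · rw [HE, ← hr, div_eq_mul_inv, ← lintegral_mul_const' _ _
      (by simpa using hat1_pos hw hr0 hz)]
    refine setLIntegral_mono' measurableSet_Ioo fun s hs => ?_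
    rw [div_eq_mul_inv]
    gcongr
    linarith [hat1_nonneg hw (hr0.trans hs.1.le)]
  · rw [HstarE, ← hr, ← restrict_Ioo_eq_restrict_Ioc]
    refine setLIntegral_mono' measurableSet_Ioo fun s hs => ?_
    gcongr
    linarith [hat1_nonneg hw hr0]

lemma Mrad_le (hw : IsRadialWeight w) (f : ℂ → ℝ) (z : ℂ) (hz : ‖z‖ < 1) :
    MradE w f z ≤ 2 * SE w (fun z => |f z|) z := by
  refine iSup₂_le fun b hb => ?_
  set r := ‖z‖ with hr
  have hr0 : 0 ≤ r := norm_nonneg _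
  rw [div_eq_mul_inv, ← lintegral_mul_const' _ _
      (by simpa using hat1_pos hw hb.1 (hb.2.trans hz)), SE, ← hr, ← lintegral_const_mul' _ _ (by simp)]
  refine le_trans (setLIntegral_mono' measurableSet_Ioo fun s hs => ?_)
    (lintegral_mono_set (Ioo_subset_Ioo_left hb.1))
  refine le_trans (mul_le_mul' le_rfl (?_ : (ENNReal.ofReal (hat1 w b))⁻¹ ≤
    2 * (ENNReal.ofReal (hat1 w s + hat1 w r))⁻¹)) (le_of_eq (by rw [ENNReal.div_eq_inv_mul]; ring))
  have h1 := hat1_anti hw hb.1 hs.1.le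
  have h2 := hat1_anti hw hb.1 hb.2.le
  have h3 : ENNReal.ofReal (hat1 w s + hat1 w r) ≤ 2 * ENNReal.ofReal (hat1 w b) := by
    rw [← ENNReal.ofReal_ofNat 2, ← ENNReal.ofReal_mul (by norm_num)]
    exact ENNReal.ofReal_le_ofReal (by linarith)
  calc (ENNReal.ofReal (hat1 w b))⁻¹ = 2 * (2 * ENNReal.ofReal (hat1 w b))⁻¹ := by
        rw [ENNReal.mul_inv (by simp) (by simp), ← mul_assoc, ENNReal.mul_inv_cancel (by simp) (by simp),
          one_mul]
    _ ≤ _ := by gcongr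

lemma main_iii {p : ℝ} (hp : 1 < p) (hw : IsRadialWeight w) (hvm : Measurable v)
    (hvpos : ∀ s ∈ Set.Ico (0:ℝ) 1, 0 < v s)
    (hvL1 : MeasureTheory.IntegrableOn (fun s => v s * w s) (Set.Ico (0:ℝ) 1)) (C : ℝ)
    (H : ∀ f : ℂ → ℝ, Measurable f → LpR p (fun s => w s * v s) f < ⊤ →
        LpE p (fun s => w s * v s) (MradE w f) ≤
          ENNReal.ofReal C * LpR p (fun s => w s * v s) f) : Ap2 p w v ≤ ENNReal.ofReal C := by
  have hp0 : 0 < p := by linarith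
  have hp1 : 0 < p - 1 := by linarith
  refine iSup₂_le fun b hb => ?_
  set W := ENNReal.ofReal (hat1 w b) with hWdef
  have W0 : W ≠ 0 := by simpa [hWdef] using hat1_pos hw hb.1 hb.2
  have WT : W ≠ ⊤ := by simp [hWdef]
  set V := ∫⁻ s in Set.Ioo b 1, ENNReal.ofReal (s * w s * v s) with hV
  have VT : V ≠ ⊤ := V_fin hw hvpos hvL1 hb.1
  set e := -(p / (p - 1)) / p with he
  rw [ENNReal.div_le_iff_le_mul (Or.inl W0) (Or.inl WT)]
  have vp : ∀ {s : ℝ}, s ∈ Ioo b 1 → 0 < v s := fun hs => hvpos _ ⟨hb.1.trans hs.1.le, hs.2⟩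
  have swn : ∀ {s : ℝ}, s ∈ Ioo b 1 → 0 ≤ s * w s := fun hs => sw_nonneg hw (hb.1.trans hs.1.le) hs.2
  have main : ∀ n : ℕ, V ^ (1/p) * (∫⁻ s in Set.Ioo b 1, ENNReal.ofReal (s * w s * min (v s ^ e) n)) ^ (1 - 1/p)
      ≤ ENNReal.ofReal C * W := by
    intro n
    set S := ∫⁻ s in Set.Ioo b 1, ENNReal.ofReal (s * w s * min (v s ^ e) n) with hS
    set g : ℝ → ℝ := (Ioo b 1).indicator (fun s => min (v s ^ e) n) with hg
    have mg : Measurable g := Measurable.indicator (by fun_prop) measurableSet_Ioo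
    have g0 : ∀ s, 0 ≤ g s := by
      intro s
      by_cases hs : s ∈ Ioo b 1
      · rw [hg, indicator_of_mem hs]
        have := Real.rpow_nonneg (vp hs).le e
        positivity
      · rw [hg, indicator_of_notMem hs]
    have ST : S ≠ ⊤ := by
      refine ne_top_of_le_ne_top (b := W * n) (ENNReal.mul_ne_top WT (by simp)) ?_
      rw [hWdef, hat1, ofReal_integral_eq_lintegral_ofReal (sw_int hw hb.1)
        (by filter_upwards [ae_restrict_mem measurableSet_Ioo] with s hs using swn hs),
        ← lintegral_mul_const' _ _ (by simp)]
      refine setLIntegral_mono' measurableSet_Ioo fun s hs => ?_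
      rw [ENNReal.ofReal_mul (swn hs)]
      gcongr
      rw [← ENNReal.ofReal_natCast]
      exact ENNReal.ofReal_le_ofReal (min_le_right _ _)
    set f : ℂ → ℝ := fun z => g ‖z‖ with hf
    have mf : Measurable f := by fun_prop
    have hH := H f mf
    set K := (volume (Ioo (-Real.pi) Real.pi)) with hK
    have K0 : K ≠ 0 := by
      rw [hK, Real.volume_Ioo]; simp [Real.pi_pos]
    have KT : K ≠ ⊤ := by rw [hK, Real.volume_Ioo]; simp
    have hJ : ∫⁻ z in ball (0:ℂ) 1, ENNReal.ofReal (|f z| ^ p * (w ‖z‖ * v ‖z‖)) ≤ S * K := by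
      rw [LpR_int p hw hvm f mf, hK, ← setLIntegral_const]
      refine lintegral_mono fun t => ?_
      have m : Measurable fun s => pol s t := meas_pol.comp (measurable_id.prodMk measurable_const)
      have m2 := vx_meas hvm
      have m4 : Measurable fun s => |f (pol s t)| ^ p :=
        (Measurable.abs (mf.comp m)).pow_const p
      rw [mu_univ hw _ (by fun_prop)]
      have e1 : S = ∫⁻ s in Ioo 0 1, (Ioo b 1).indicator (fun s => ENNReal.ofReal (s * w s * min (v s ^ e) n)) s := by
        rw [setLIntegral_indicator measurableSet_Ioo, inter_eq_left.mpr (Ioo_subset_Ioo_left hb.1)]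
      rw [e1]
      refine setLIntegral_mono' measurableSet_Ioo fun s hs => ?_
      have ef : f (pol s t) = g s := by rw [hf]; try dsimp only; rw [norm_pol hs.1]
      rw [ef, abs_of_nonneg (g0 s)]
      by_cases hs' : s ∈ Ioo b 1
      · rw [indicator_of_mem hs', hg, indicator_of_mem hs', vx_eq hs.1.le hs.2]
        have vs := vp hs'
        have h0 : 0 ≤ min (v s ^ e) (n:ℝ) := le_min (Real.rpow_nonneg vs.le _) (by positivity)
        rw [← ENNReal.ofReal_mul (by positivity), ← ENNReal.ofReal_mul (swn hs')]
        refine ENNReal.ofReal_le_ofReal (mul_le_mul_of_nonneg_left ?_ (swn hs'))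
        have e2 : min (v s ^ e) (n:ℝ) ^ p = min (v s ^ e) (n:ℝ) * min (v s ^ e) (n:ℝ) ^ (p - 1) := by
          conv_rhs => enter [1]; rw [← Real.rpow_one (min (v s ^ e) (n:ℝ))]
          rw [← Real.rpow_add_of_nonneg h0 (by norm_num) hp1.le]; congr 1; ring
        rw [e2, mul_assoc]
        refine mul_le_of_le_one_right h0 ?_
        calc min (v s ^ e) (n:ℝ) ^ (p - 1) * v s ≤ (v s ^ e) ^ (p - 1) * v s := by
              gcongr
              exact min_le_left _ _
          _ = 1 := by
              rw [← Real.rpow_mul vs.le]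
              have : e * (p - 1) = -1 := by rw [he]; field_simp
              rw [this, Real.rpow_neg_one, inv_mul_cancel₀ vs.ne']
      · rw [hg, indicator_of_notMem hs', Real.zero_rpow hp0.ne']; simp
    have hI : (S / W) ^ p * V * K ≤ ∫⁻ z in ball (0:ℂ) 1, MradE w f z ^ p * ENNReal.ofReal (w ‖z‖ * v ‖z‖) := by
      have low : ∫⁻ z in ball (0:ℂ) 1, (({z : ℂ | b < ‖z‖}.indicator (fun _ => (S / W) ^ p) z) *
          ENNReal.ofReal ((fun s => w s * v s) ‖z‖)) ≤
          ∫⁻ z in ball (0:ℂ) 1, MradE w f z ^ p * ENNReal.ofReal (w ‖z‖ * v ‖z‖) := by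
        refine setLIntegral_mono' measurableSet_ball fun z hz => ?_
        try dsimp only
        by_cases hbz : b < ‖z‖
        · rw [indicator_of_mem (by exact hbz)]
          gcongr
          refine le_trans (le_of_eq ?_) (le_iSup₂ (f := fun b (_ : b ∈ Ico (0:ℝ) ‖z‖) =>
            (∫⁻ s in Set.Ioo b 1, ENNReal.ofReal (|f ((s / ‖z‖) • z)| * (s * w s))) /
              ENNReal.ofReal (hat1 w b)) b ⟨hb.1, hbz⟩)
          try dsimp only
          congr 1
          refine setLIntegral_congr_fun measurableSet_Ioo fun s hs => ?_
          have s0 : 0 < s := hb.1.trans_lt hs.1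
          have z0 : 0 < ‖z‖ := hb.1.trans_lt hbz
          have : ‖(s / ‖z‖) • z‖ = s := by
            rw [norm_smul, Real.norm_eq_abs, abs_of_pos (by positivity)]; field_simp
          rw [hf]
          try dsimp only
          rw [this, abs_of_nonneg (g0 s), hg, indicator_of_mem hs, mul_comm]
        · rw [indicator_of_notMem (by exact hbz), zero_mul]; exact zero_le
      refine le_trans (le_of_eq ?_) low
      have mS : MeasurableSet {z : ℂ | b < ‖z‖} := measurableSet_lt measurable_const measurable_norm
      rw [polar_eq _ (wv_aem hw hvm) _ (measurable_const.indicator mS), hK, ← setLIntegral_const]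
      refine lintegral_congr fun t => ?_
      have e1 : (S / W) ^ p * V = ∫⁻ s in Ioo 0 1, (Ioo b 1).indicator
          (fun s => (S / W) ^ p * ENNReal.ofReal (s * w s * v s)) s := by
        rw [setLIntegral_indicator measurableSet_Ioo, inter_eq_left.mpr (Ioo_subset_Ioo_left hb.1),
          lintegral_const_mul']
        exact ENNReal.rpow_ne_top_of_nonneg hp0.le (ENNReal.div_ne_top ST W0)
      rw [e1]
      refine setLIntegral_congr_fun measurableSet_Ioo fun s hs => ?_
      have en : (pol s t ∈ {z : ℂ | b < ‖z‖}) ↔ s ∈ Ioo b 1 := by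
        change b < ‖pol s t‖ ↔ _
        rw [norm_pol hs.1]
        exact ⟨fun h => ⟨h, hs.2⟩, fun h => h.1⟩
      try dsimp only
      by_cases hs' : s ∈ Ioo b 1
      · rw [indicator_of_mem hs', indicator_of_mem (en.mpr hs'), rwv hw hs, vx_eq hs.1.le hs.2,
          ENNReal.ofReal_mul (swn hs')]
        ring
      · rw [indicator_of_notMem hs', indicator_of_notMem (fun h => hs' (en.mp h))]; simp
    have P0 : ENNReal.ofReal Real.pi ≠ 0 := by simpa using Real.pi_pos
    have PT : ENNReal.ofReal Real.pi ≠ ⊤ := by simp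
    have JT : LpR p (fun s => w s * v s) f < ⊤ := by
      refine ENNReal.rpow_lt_top_of_nonneg (by positivity) (ENNReal.div_ne_top ?_ P0)
      exact ne_top_of_le_ne_top (ENNReal.mul_ne_top ST KT) hJ
    have h2 := hH JT
    have h3 : ((S / W) ^ p * V * K / ENNReal.ofReal Real.pi) ^ (1/p) ≤
        ENNReal.ofReal C * (S * K / ENNReal.ofReal Real.pi) ^ (1/p) := by
      refine le_trans ?_ (h2.trans ?_)
      · unfold LpE; gcongr
      · unfold LpR; gcongr
    have ip : 0 ≤ 1 / p := by positivity
    rw [mul_div_assoc, mul_div_assoc, ENNReal.mul_rpow_of_nonneg _ _ ip,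
      ENNReal.mul_rpow_of_nonneg _ _ ip, ENNReal.mul_rpow_of_nonneg _ _ ip, ← mul_assoc] at h3
    have kp0 : (K / ENNReal.ofReal Real.pi) ≠ 0 := (ENNReal.div_pos K0 PT).ne'
    have kpT : (K / ENNReal.ofReal Real.pi) ≠ ⊤ := ENNReal.div_ne_top KT P0
    have h4 := (ENNReal.mul_le_mul_iff_left (ENNReal.rpow_pos (pos_iff_ne_zero.mpr kp0) kpT).ne'
      (ENNReal.rpow_ne_top_of_nonneg ip kpT)).mp h3
    rw [← ENNReal.rpow_mul, mul_one_div_cancel hp0.ne', ENNReal.rpow_one] at h4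
    by_cases S0 : S = 0
    · have : 0 < 1 - 1/p := by
        rw [sub_pos, div_lt_one hp0]; exact hp
      rw [S0, ENNReal.zero_rpow_of_pos this, mul_zero]; exact zero_le
    have e3 : S = S ^ (1 - 1/p) * S ^ (1/p) := by
      rw [← ENNReal.rpow_add _ _ S0 ST, sub_add_cancel, ENNReal.rpow_one]
    have sp0 : S ^ (1/p) ≠ 0 := (ENNReal.rpow_pos (pos_iff_ne_zero.mpr S0) ST).ne'
    have spT : S ^ (1/p) ≠ ⊤ := ENNReal.rpow_ne_top_of_nonneg ip ST
    refine (ENNReal.mul_le_mul_iff_left sp0 spT).mp ?_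
    calc V ^ (1/p) * S ^ (1 - 1/p) * S ^ (1/p) = V ^ (1/p) * S := by rw [mul_assoc, ← e3]
      _ = (S / W * V ^ (1/p)) * W := by
          rw [mul_right_comm, ENNReal.div_mul_cancel W0 WT, mul_comm]
      _ ≤ (ENNReal.ofReal C * S ^ (1/p)) * W := by gcongr
      _ = _ := by ring
  have lim : Filter.Tendsto (fun n : ℕ => ∫⁻ s in Set.Ioo b 1, ENNReal.ofReal (s * w s * min (v s ^ e) n))
      Filter.atTop (nhds (∫⁻ s in Set.Ioo b 1, ENNReal.ofReal (s * w s * v s ^ e))) := by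
    refine lintegral_tendsto_of_tendsto_of_monotone (fun n => ?_) ?_ ?_
    · have := (w_aem hw).mono_measure (Measure.restrict_mono (Ioo_subset_Ioo_left (b := 1) hb.1) le_rfl)
      fun_prop
    · filter_upwards [ae_restrict_mem measurableSet_Ioo] with s hs m n hmn
      refine ENNReal.ofReal_le_ofReal (mul_le_mul_of_nonneg_left ?_ (swn hs))
      exact min_le_min le_rfl (by exact_mod_cast hmn)
    · filter_upwards with s
      obtain ⟨N, hN⟩ := exists_nat_ge (v s ^ e)
      refine tendsto_const_nhds.congr' ?_
      filter_upwards [Filter.eventually_ge_atTop N] with n hn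
      have : v s ^ e ≤ n := hN.trans (by exact_mod_cast hn)
      rw [min_eq_left this]
  have lim2 := ENNReal.Tendsto.const_mul (a := V ^ (1/p))
    ((ENNReal.continuous_rpow_const (y := 1 - 1/p)).tendsto _ |>.comp lim)
    (Or.inr (ENNReal.rpow_ne_top_of_nonneg (by positivity) VT))
  exact le_of_tendsto' lim2 main

end conn

/-- Theorem: Calderón operator, reformulated. Let `1 < p < ∞`, let `ω` be a
radial weight and let `ν : [0,1) → (0,∞)` be measurable with `ν ∈ L¹_ω([0,1))`, so that `ων`
is a radial weight. Then the following are equivalent: (i) `H_ω + H*_ω` is bounded on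
`L^p_{ων}` (on nonnegative functions); (ii) `S_{ω₁,rad}` is bounded on `L^p_{ων}` (on
nonnegative functions); (iii) `M_{ω₁,rad}` is bounded on `L^p_{ων}`; (iv) `A_p(ω,ων) < ∞`. -/
theorem calderon_tfae' (p : ℝ) (hp : 1 < p) (w v : ℝ → ℝ)
    (hw : IsRadialWeight w) (hvm : Measurable v) (hvpos : ∀ s ∈ Set.Ico (0:ℝ) 1, 0 < v s)
    (hvL1 : MeasureTheory.IntegrableOn (fun s => v s * w s) (Set.Ico (0:ℝ) 1)) :
    ((∃ C > (0:ℝ), ∀ f : ℂ → ℝ, Measurable f → (∀ z, 0 ≤ f z) →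
        LpR p (fun s => w s * v s) f < ⊤ →
        LpE p (fun s => w s * v s) (fun z => HE w f z + HstarE w f z) ≤
          ENNReal.ofReal C * LpR p (fun s => w s * v s) f) ↔
      Ap2 p w v < ⊤) ∧
    ((∃ C > (0:ℝ), ∀ f : ℂ → ℝ, Measurable f → (∀ z, 0 ≤ f z) →
        LpR p (fun s => w s * v s) f < ⊤ →
        LpE p (fun s => w s * v s) (SE w f) ≤
          ENNReal.ofReal C * LpR p (fun s => w s * v s) f) ↔
      Ap2 p w v < ⊤) ∧
    ((∃ C > (0:ℝ), ∀ f : ℂ → ℝ, Measurable f → LpR p (fun s => w s * v s) f < ⊤ →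
        LpE p (fun s => w s * v s) (MradE w f) ≤
          ENNReal.ofReal C * LpR p (fun s => w s * v s) f) ↔
      Ap2 p w v < ⊤) := by
  have ip : 0 ≤ 1 / p := by have : 0 < p := by linarith
                            positivity
  have hi : Ap2 p w v < ⊤ → (∃ C > (0:ℝ), ∀ f : ℂ → ℝ, Measurable f → (∀ z, 0 ≤ f z) →
        LpR p (fun s => w s * v s) f < ⊤ →
        LpE p (fun s => w s * v s) (fun z => HE w f z + HstarE w f z) ≤
          ENNReal.ofReal C * LpR p (fun s => w s * v s) f) := by
    intro hA
    obtain ⟨C, hC, H⟩ := main_i hp hw hvm hvpos hvL1 hA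
    refine ⟨(C ^ (1/p)).toReal + 1, by positivity, fun f hf hf0 _ => ?_⟩
    have hCp : C ^ (1/p) ≠ ⊤ := ENNReal.rpow_ne_top_of_nonneg ip hC
    have h1 : C ^ (1/p) ≤ ENNReal.ofReal ((C ^ (1/p)).toReal + 1) := by
      rw [← ENNReal.ofReal_toReal hCp]
      refine ENNReal.ofReal_le_ofReal ?_
      rw [ENNReal.ofReal_toReal hCp]; linarith
    calc LpE p (fun s => w s * v s) (fun z => HE w f z + HstarE w f z) ≤
          C ^ (1/p) * LpR p (fun s => w s * v s) f := by
          unfold LpE LpR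
          rw [← ENNReal.mul_rpow_of_nonneg _ _ ip, ← mul_div_assoc]
          gcongr
          exact H f hf hf0
      _ ≤ _ := by gcongr
  have hii : (∃ C > (0:ℝ), ∀ f : ℂ → ℝ, Measurable f → (∀ z, 0 ≤ f z) →
        LpR p (fun s => w s * v s) f < ⊤ →
        LpE p (fun s => w s * v s) (fun z => HE w f z + HstarE w f z) ≤
          ENNReal.ofReal C * LpR p (fun s => w s * v s) f) →
      (∃ C > (0:ℝ), ∀ f : ℂ → ℝ, Measurable f → (∀ z, 0 ≤ f z) →
        LpR p (fun s => w s * v s) f < ⊤ →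
        LpE p (fun s => w s * v s) (SE w f) ≤
          ENNReal.ofReal C * LpR p (fun s => w s * v s) f) := by
    rintro ⟨C, hC, H⟩
    refine ⟨C, hC, fun f hf hf0 hfT => le_trans ?_ (H f hf hf0 hfT)⟩
    unfold LpE
    refine ENNReal.rpow_le_rpow (ENNReal.div_le_div_right ?_ _) ip
    refine setLIntegral_mono' measurableSet_ball fun z hz => ?_
    have := SE_le hw f z (by simpa using hz)
    gcongr
  have hiii : (∃ C > (0:ℝ), ∀ f : ℂ → ℝ, Measurable f → (∀ z, 0 ≤ f z) →
        LpR p (fun s => w s * v s) f < ⊤ →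
        LpE p (fun s => w s * v s) (SE w f) ≤
          ENNReal.ofReal C * LpR p (fun s => w s * v s) f) →
      (∃ C > (0:ℝ), ∀ f : ℂ → ℝ, Measurable f → LpR p (fun s => w s * v s) f < ⊤ →
        LpE p (fun s => w s * v s) (MradE w f) ≤
          ENNReal.ofReal C * LpR p (fun s => w s * v s) f) := by
    rintro ⟨C, hC, H⟩
    refine ⟨2 * C, by positivity, fun f hf hfT => ?_⟩
    have e : LpR p (fun s => w s * v s) (fun z => |f z|) = LpR p (fun s => w s * v s) f := by
      unfold LpR; simp only [abs_abs]
    have h1 := H (fun z => |f z|) (by fun_prop) (fun z => abs_nonneg _) (by rw [e]; exact hfT)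
    rw [e] at h1
    have hp0 : 0 < p := by linarith
    calc LpE p (fun s => w s * v s) (MradE w f) ≤
          2 * LpE p (fun s => w s * v s) (SE w fun z => |f z|) := by
          unfold LpE
          have e2 : (2:ℝ≥0∞) = (2 ^ p) ^ (1/p) := by
            rw [← ENNReal.rpow_mul, mul_one_div_cancel hp0.ne', ENNReal.rpow_one]
          nth_rw 1 [e2]
          rw [← ENNReal.mul_rpow_of_nonneg _ _ ip, ← mul_div_assoc, ← lintegral_const_mul' _ _
            (ENNReal.rpow_ne_top_of_nonneg hp0.le (by simp))]
          refine ENNReal.rpow_le_rpow (ENNReal.div_le_div_right ?_ _) ip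
          refine setLIntegral_mono' measurableSet_ball fun z hz => ?_
          have := Mrad_le hw f z (by simpa using hz)
          rw [← mul_assoc, ← ENNReal.mul_rpow_of_nonneg _ _ hp0.le]
          gcongr
      _ ≤ 2 * (ENNReal.ofReal C * LpR p (fun s => w s * v s) f) := by gcongr
      _ = _ := by rw [ENNReal.ofReal_mul (by norm_num), ENNReal.ofReal_ofNat, mul_assoc]
  have hiv : (∃ C > (0:ℝ), ∀ f : ℂ → ℝ, Measurable f → LpR p (fun s => w s * v s) f < ⊤ →
        LpE p (fun s => w s * v s) (MradE w f) ≤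
          ENNReal.ofReal C * LpR p (fun s => w s * v s) f) → Ap2 p w v < ⊤ := by
    rintro ⟨C, hC, H⟩
    exact (main_iii hp hw hvm hvpos hvL1 C H).trans_lt ENNReal.ofReal_lt_top
  exact ⟨⟨fun h => hiv (hiii (hii h)), hi⟩, ⟨fun h => hiv (hiii h), fun h => hii (hi h)⟩,
    ⟨hiv, fun h => hiii (hii (hi h))⟩⟩

end
end

section
/- Let 1 < p < ∞, let ω be a radial weight, and let ν : [0,1) → (0,∞) be a measurable function with ν ∈ L¹_ω([0,1)). If A_p(ω,ων) < ∞, then there is a constant C > 0, depending only on p and A_p(ω,ων), such that ‖M_{ω₁,rad}(f)‖_{L^p_{ων}} ≤ C ‖f‖_{L^p_{ων}} for every f ∈ L^p_{ων}. -/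
open MeasureTheory Set Metric
open scoped ENNReal NNReal

noncomputable section

/-- One-dimensional maximal operator over the nested intervals `(b,1)`. -/
def Nmax (m : Measure ℝ) (g : ℝ → ℝ≥0∞) (x : ℝ) : ℝ≥0∞ :=
  ⨆ b ∈ Set.Ico (0:ℝ) x, (∫⁻ s in Set.Ioo b 1, g s ∂m) / m (Set.Ioo b 1)

lemma Nmax_mono (m : Measure ℝ) (g : ℝ → ℝ≥0∞) : Monotone (Nmax m g) := by
  intro x y hxy
  exact biSup_mono fun b hb => ⟨hb.1, hb.2.trans_le hxy⟩

lemma Nmax_meas (m : Measure ℝ) (g : ℝ → ℝ≥0∞) : Measurable (Nmax m g) :=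
  (Nmax_mono m g).measurable

lemma Nmax_weak (m : Measure ℝ) (g : ℝ → ℝ≥0∞) (t : ℝ≥0∞) :
    t * m ({x | t < Nmax m g x} ∩ Ioo 0 1) ≤ ∫⁻ s in Ioo 0 1, g s ∂m := by
  set B : Set ℝ := {b | b ∈ Ico (0:ℝ) 1 ∧ t < (∫⁻ s in Ioo b 1, g s ∂m) / m (Ioo b 1)} with hB
  obtain ⟨T, hTB, hTc, hTU⟩ := TopologicalSpace.isOpen_biUnion_countable B
    (fun b => Ioo b (1:ℝ)) (fun _ _ => isOpen_Ioo)
  have hsub : ({x | t < Nmax m g x} ∩ Ioo 0 1) ⊆ ⋃ i ∈ T, Ioo i (1:ℝ) := by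
    rw [hTU]
    rintro x ⟨hx, hx1⟩
    simp only [mem_ofPred_eq, Nmax, lt_iSup_iff] at hx
    obtain ⟨b, hb, hlt⟩ := hx
    exact mem_iUnion₂.2 ⟨b, ⟨⟨hb.1, hb.2.trans hx1.2⟩, hlt⟩, hb.2, hx1.2⟩
  have hdir : DirectedOn (Function.onFun (fun x1 x2 => x1 ⊆ x2) (fun b => Ioo b (1:ℝ))) T := by
    intro a ha b hb
    rcases le_total a b with h | h
    · exact ⟨a, ha, subset_rfl, Ioo_subset_Ioo_left h⟩
    · exact ⟨b, hb, Ioo_subset_Ioo_left h, subset_rfl⟩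
  calc t * m ({x | t < Nmax m g x} ∩ Ioo 0 1) ≤ t * m (⋃ i ∈ T, Ioo i (1:ℝ)) := by gcongr
    _ = ⨆ i ∈ T, t * m (Ioo i 1) := by
        rw [measure_biUnion_eq_iSup hTc hdir]
        simp only [ENNReal.mul_iSup]
    _ ≤ ∫⁻ s in Ioo 0 1, g s ∂m := by
        refine iSup₂_le fun b hb => ?_
        obtain ⟨hb1, hb2⟩ := hTB hb
        calc t * m (Ioo b 1) ≤ (∫⁻ s in Ioo b 1, g s ∂m) / m (Ioo b 1) * m (Ioo b 1) := by gcongr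
          _ ≤ ∫⁻ s in Ioo b 1, g s ∂m := ENNReal.mul_le_of_le_div le_rfl
          _ ≤ _ := lintegral_mono_set (Ioo_subset_Ioo_left hb1.1)

lemma Nmax_trunc (m : Measure ℝ) (g : ℝ → ℝ≥0∞) (u : ℝ≥0∞) :
    u * m ({x | 2 * u < Nmax m g x} ∩ Ioo 0 1) ≤
      ∫⁻ s in Ioo 0 1, {s | u < g s}.indicator g s ∂m := by
  refine le_trans ?_ (Nmax_weak m _ u)
  gcongr u * m (?_ ∩ _)
  intro x hx
  by_contra hcon
  simp only [mem_ofPred_eq, not_lt] at hcon hx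
  refine absurd hx (not_lt.2 ?_)
  refine iSup₂_le fun b hb => ?_
  have h1 : (∫⁻ s in Ioo b 1, g s ∂m) ≤
      (∫⁻ s in Ioo b 1, {s | u < g s}.indicator g s ∂m) + u * m (Ioo b 1) := by
    calc (∫⁻ s in Ioo b 1, g s ∂m) ≤ ∫⁻ s in Ioo b 1, ({s | u < g s}.indicator g s + u) ∂m := by
          refine lintegral_mono fun s => ?_
          by_cases h : u < g s
          · simp [indicator, h]
          · simp only [indicator, mem_ofPred_eq, h, if_false, zero_add]; exact not_lt.1 h
      _ = _ := by
          rw [lintegral_add_right _ measurable_const]; simp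
  calc (∫⁻ s in Ioo b 1, g s ∂m) / m (Ioo b 1)
      ≤ ((∫⁻ s in Ioo b 1, {s | u < g s}.indicator g s ∂m) + u * m (Ioo b 1)) / m (Ioo b 1) := by
        gcongr
    _ = (∫⁻ s in Ioo b 1, {s | u < g s}.indicator g s ∂m) / m (Ioo b 1)
        + u * m (Ioo b 1) / m (Ioo b 1) := ENNReal.add_div
    _ ≤ u + u := by
        gcongr
        · refine le_trans ?_ hcon
          exact le_iSup₂ (f := fun b (_ : b ∈ Ico (0:ℝ) x) =>
            (∫⁻ s in Ioo b 1, {s | u < g s}.indicator g s ∂m) / m (Ioo b 1)) b hb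
        · exact ENNReal.div_le_of_le_mul le_rfl
    _ = 2 * u := (two_mul u).symm

lemma lint_rpow (q : ℝ) (hq : 0 < q) (a : ℝ) (ha : 0 ≤ a) :
    ∫⁻ t in Ioo 0 a, ENNReal.ofReal (t ^ (q - 1)) = ENNReal.ofReal (a ^ q / q) := by
  have hint : IntervalIntegrable (fun t : ℝ => t ^ (q - 1)) volume 0 a :=
    intervalIntegral.intervalIntegrable_rpow' (by linarith)
  have hI := (intervalIntegrable_iff_integrableOn_Ioo_of_le ha).1 hint
  rw [← ofReal_integral_eq_lintegral_ofReal hI]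
  · rw [← integral_Ioc_eq_integral_Ioo, ← intervalIntegral.integral_of_le ha,
      integral_rpow (Or.inl (by linarith))]
    simp [Real.zero_rpow hq.ne']
  · filter_upwards [ae_restrict_mem measurableSet_Ioo] with t ht
    exact Real.rpow_nonneg ht.1.le _

lemma layer_fin (q : ℝ) (hq : 0 < q) (a : ℝ≥0∞) (ha : a ≠ ⊤) :
    ∫⁻ t in Ioi (0:ℝ), {t : ℝ | ENNReal.ofReal t < a}.indicator
      (fun t => ENNReal.ofReal (t ^ (q - 1))) t = a ^ q * ENNReal.ofReal (1 / q) := by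
  have hme : MeasurableSet {t : ℝ | ENNReal.ofReal t < a} :=
    measurableSet_lt ENNReal.measurable_ofReal measurable_const
  rw [lintegral_indicator hme, Measure.restrict_restrict hme]
  have : {t : ℝ | ENNReal.ofReal t < a} ∩ Ioi 0 = Ioo 0 a.toReal := by
    ext t
    simp only [mem_inter_iff, mem_ofPred_eq, mem_Ioi, mem_Ioo]
    rw [and_comm]
    refine and_congr_right fun h => ?_
    rw [ENNReal.ofReal_lt_iff_lt_toReal h.le ha]
  rw [this, lint_rpow q hq _ ENNReal.toReal_nonneg, div_eq_mul_one_div,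
    ENNReal.ofReal_mul (by positivity), ← ENNReal.ofReal_rpow_of_nonneg ENNReal.toReal_nonneg hq.le,
    ENNReal.ofReal_toReal ha]

lemma layer_ge (q : ℝ) (hq : 0 < q) (a : ℝ≥0∞) :
    a ^ q * ENNReal.ofReal (1 / q) ≤ ∫⁻ t in Ioi (0:ℝ), {t : ℝ | ENNReal.ofReal t < a}.indicator
      (fun t => ENNReal.ofReal (t ^ (q - 1))) t := by
  by_cases ha : a = ⊤
  · subst ha
    have hkey : ∀ n : ℕ, ENNReal.ofReal (1 / q) * (n:ℝ≥0∞) ^ q ≤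
      ∫⁻ t in Ioi (0:ℝ), {t : ℝ | ENNReal.ofReal t < ⊤}.indicator
        (fun t => ENNReal.ofReal (t ^ (q - 1))) t := by
      intro n
      rw [mul_comm, ← layer_fin q hq n (ENNReal.natCast_ne_top n)]
      refine lintegral_mono fun t => ?_
      exact indicator_le_indicator_of_subset
        (fun t _ => ENNReal.ofReal_lt_top) (fun _ => zero_le) t
    have hlim : Filter.Tendsto (fun n : ℕ => ENNReal.ofReal (1 / q) * (n:ℝ≥0∞) ^ q) Filter.atTop
        (nhds (ENNReal.ofReal (1 / q) * ⊤ ^ q)) := by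
      refine ENNReal.Tendsto.const_mul ?_ (Or.inr ENNReal.ofReal_ne_top)
      exact (ENNReal.continuous_rpow_const.tendsto _).comp ENNReal.tendsto_nat_nhds_top
    rw [mul_comm]
    exact le_of_tendsto' hlim hkey
  · exact (layer_fin q hq a ha).ge

lemma layer_le (q : ℝ) (hq : 0 < q) (a : ℝ≥0∞) :
    ∫⁻ t in Ioi (0:ℝ), {t : ℝ | ENNReal.ofReal t < a}.indicator
      (fun t => ENNReal.ofReal (t ^ (q - 1))) t ≤ a ^ q * ENNReal.ofReal (1 / q) := by
  by_cases ha : a = ⊤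
  · subst ha
    rw [ENNReal.top_rpow_of_pos hq, ENNReal.top_mul]
    · exact le_top
    · have : 0 < 1 / q := by positivity
      simpa using this
  · exact (layer_fin q hq a ha).le

/-- constant in the Doob inequality -/
def Cd (q : ℝ) : ℝ := q * 2 ^ q / (q - 1)

lemma doob (q : ℝ) (hq : 1 < q) (m : Measure ℝ) [SFinite m] (g : ℝ → ℝ≥0∞) (hg : Measurable g) :
    ∫⁻ x in Ioo 0 1, Nmax m g x ^ q ∂m ≤
      ENNReal.ofReal (Cd q) * ∫⁻ x in Ioo 0 1, g x ^ q ∂m := by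
  have hq0 : 0 < q := by linarith
  have hq1 : 0 < q - 1 := by linarith
  set r := m.restrict (Ioo 0 1) with hr
  -- layer cake
  have hNm := Nmax_meas m g
  have hJ : Measurable (fun z : ℝ × ℝ => ({z : ℝ × ℝ | ENNReal.ofReal z.2 < Nmax m g z.1}.indicator
      (fun z => ENNReal.ofReal (z.2 ^ (q - 1))) z)) := by
    refine Measurable.indicator (by fun_prop) ?_
    exact measurableSet_lt (by fun_prop) (by fun_prop)
  have hK : Measurable (fun z : ℝ × ℝ =>
      ({z : ℝ × ℝ | ENNReal.ofReal z.2 < 2 * g z.1}.indicator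
      (fun z => ENNReal.ofReal (z.2 ^ (q - 1 - 1)) * (2 * g z.1)) z)) := by
    refine Measurable.indicator (by fun_prop) ?_
    exact measurableSet_lt (by fun_prop) (by fun_prop)
  have h1 : (∫⁻ x, Nmax m g x ^ q ∂r) * ENNReal.ofReal (1 / q) ≤
      ∫⁻ t in Ioi (0:ℝ), ∫⁻ x, ({z : ℝ × ℝ | ENNReal.ofReal z.2 < Nmax m g z.1}.indicator
      (fun z => ENNReal.ofReal (z.2 ^ (q - 1))) (x, t)) ∂r := by
    rw [← lintegral_mul_const _ (by fun_prop), ← lintegral_lintegral_swap hJ.aemeasurable]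
    exact lintegral_mono fun x => layer_ge q hq0 _
  have h2 : ∀ t ∈ Ioi (0:ℝ),
      ∫⁻ x, ({z : ℝ × ℝ | ENNReal.ofReal z.2 < Nmax m g z.1}.indicator
      (fun z => ENNReal.ofReal (z.2 ^ (q - 1))) (x, t)) ∂r ≤
      ∫⁻ x, ({z : ℝ × ℝ | ENNReal.ofReal z.2 < 2 * g z.1}.indicator
      (fun z => ENNReal.ofReal (z.2 ^ (q - 1 - 1)) * (2 * g z.1)) (x, t)) ∂r := by
    intro t ht
    have ht : 0 < t := ht
    have htr := Nmax_trunc m g (ENNReal.ofReal (t / 2))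
    have h2t : 2 * ENNReal.ofReal (t / 2) = ENNReal.ofReal t := by
      rw [← ENNReal.ofReal_ofNat 2, ← ENNReal.ofReal_mul (by norm_num)]; congr 1; ring
    rw [h2t] at htr
    have e1 : ∫⁻ x, ({z : ℝ × ℝ | ENNReal.ofReal z.2 < Nmax m g z.1}.indicator
      (fun z => ENNReal.ofReal (z.2 ^ (q - 1))) (x, t)) ∂r =
      ENNReal.ofReal (t ^ (q - 1)) * m ({x | ENNReal.ofReal t < Nmax m g x} ∩ Ioo 0 1) := by
      have hms : MeasurableSet {x | ENNReal.ofReal t < Nmax m g x} :=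
        measurableSet_lt measurable_const hNm
      rw [← Measure.restrict_apply hms, ← lintegral_indicator_const hms]
      rfl
    have e2 : ∫⁻ x, ({z : ℝ × ℝ | ENNReal.ofReal z.2 < 2 * g z.1}.indicator
      (fun z => ENNReal.ofReal (z.2 ^ (q - 1 - 1)) * (2 * g z.1)) (x, t)) ∂r =
      (ENNReal.ofReal (t ^ (q - 1 - 1)) * 2) *
        ∫⁻ s in Ioo 0 1, {s | ENNReal.ofReal (t / 2) < g s}.indicator g s ∂m := by
      rw [← lintegral_const_mul _ (hg.indicator (measurableSet_lt measurable_const hg))]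
      refine lintegral_congr fun x => ?_
      have hiff : (ENNReal.ofReal t < 2 * g x) ↔ ENNReal.ofReal (t / 2) < g x := by
        rw [← h2t]
        exact ENNReal.mul_lt_mul_iff_right (by norm_num) (by norm_num)
      by_cases h : ENNReal.ofReal (t / 2) < g x
      · simp [indicator, hiff, h, mul_assoc]
      · simp [indicator, hiff, h]
    rw [e1, e2]
    calc ENNReal.ofReal (t ^ (q - 1)) * m ({x | ENNReal.ofReal t < Nmax m g x} ∩ Ioo 0 1)
        = (ENNReal.ofReal (t ^ (q - 1 - 1)) * 2) * (ENNReal.ofReal (t / 2) *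
          m ({x | ENNReal.ofReal t < Nmax m g x} ∩ Ioo 0 1)) := by
          rw [← mul_assoc, mul_assoc _ 2, h2t, ← ENNReal.ofReal_mul (by positivity)]
          congr 2
          have h5 := Real.rpow_sub_one ht.ne' (q - 1)
          rw [h5]; field_simp
      _ ≤ _ := by gcongr
  have h3 : ∫⁻ t in Ioi (0:ℝ), ∫⁻ x, ({z : ℝ × ℝ | ENNReal.ofReal z.2 < 2 * g z.1}.indicator
      (fun z => ENNReal.ofReal (z.2 ^ (q - 1 - 1)) * (2 * g z.1)) (x, t)) ∂r ≤
      (∫⁻ x, g x ^ q ∂r) * (2 ^ q * ENNReal.ofReal (1 / (q - 1))) := by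
    rw [← lintegral_lintegral_swap hK.aemeasurable, ← lintegral_mul_const _ (by fun_prop)]
    refine lintegral_mono fun x => ?_
    calc _ = ∫⁻ t in Ioi (0:ℝ), ({t : ℝ | ENNReal.ofReal t < 2 * g x}.indicator
          (fun t => ENNReal.ofReal (t ^ (q - 1 - 1))) t) * (2 * g x) := by
          refine lintegral_congr fun t => ?_
          by_cases h : ENNReal.ofReal t < 2 * g x
          · simp [indicator, h]
          · simp [indicator, h]
      _ = (∫⁻ t in Ioi (0:ℝ), ({t : ℝ | ENNReal.ofReal t < 2 * g x}.indicator
          (fun t => ENNReal.ofReal (t ^ (q - 1 - 1))) t)) * (2 * g x) := by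
          rw [lintegral_mul_const]
          exact Measurable.indicator (by fun_prop)
            (measurableSet_lt ENNReal.measurable_ofReal measurable_const)
      _ ≤ ((2 * g x) ^ (q - 1) * ENNReal.ofReal (1 / (q - 1))) * (2 * g x) := by
          gcongr
          exact layer_le (q - 1) hq1 _
      _ = _ := by
          have : (2 * g x) ^ (q - 1) * (2 * g x) = (2 * g x) ^ q := by
            conv_lhs => rw [← ENNReal.rpow_one (2 * g x), ← ENNReal.rpow_mul, one_mul]
            rw [← ENNReal.rpow_add_of_nonneg _ _ hq1.le zero_le_one]
            congr 1; ring
          rw [mul_right_comm, this, ENNReal.mul_rpow_of_nonneg _ _ hq0.le]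
          ring
  have h4 := h1.trans ((setLIntegral_mono' measurableSet_Ioi h2).trans h3)
  have hqq : ENNReal.ofReal (1 / q) * ENNReal.ofReal q = 1 := by
    rw [← ENNReal.ofReal_mul (by positivity)]
    simp [hq0.ne']
  have hC : ENNReal.ofReal (Cd q) = 2 ^ q * ENNReal.ofReal (1 / (q - 1)) * ENNReal.ofReal q := by
    have h2q : (2:ℝ≥0∞) ^ q = ENNReal.ofReal (2 ^ q) := by
      rw [← ENNReal.ofReal_rpow_of_pos (by norm_num)]; simp
    rw [h2q, ← ENNReal.ofReal_mul (by positivity), ← ENNReal.ofReal_mul (by positivity)]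
    congr 1; unfold Cd; field_simp
  calc ∫⁻ x, Nmax m g x ^ q ∂r
      = (∫⁻ x, Nmax m g x ^ q ∂r) * ENNReal.ofReal (1 / q) * ENNReal.ofReal q := by
        rw [mul_assoc, hqq, mul_one]
    _ ≤ (∫⁻ x, g x ^ q ∂r) * (2 ^ q * ENNReal.ofReal (1 / (q - 1))) * ENNReal.ofReal q := by
        gcongr
    _ = _ := by rw [hC]; ring

lemma alg_aux (p : ℝ) (hp : 1 < p) (A X m v s : ℝ≥0∞) (hm : m ≠ 0) (hm' : m ≠ ⊤)
    (hv : v ≠ 0) (hv' : v ≠ ⊤) (hs : s ≠ 0) (hs' : s ≠ ⊤)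
    (h : v ^ (1 / p) * s ^ (1 - 1 / p) / m ≤ A) :
    (X / m) ^ (p - 1) ≤ A ^ p * (m / v * (X / s) ^ (p - 1)) := by
  have hp0 : 0 < p := by linarith
  have hp1 : 0 ≤ p - 1 := by linarith
  have h1 : v * s ^ (p - 1) ≤ A ^ p * m ^ p := by
    have h2 := ENNReal.rpow_le_rpow ((ENNReal.div_le_iff hm hm').1 h) hp0.le
    rw [ENNReal.mul_rpow_of_nonneg _ _ hp0.le, ENNReal.mul_rpow_of_nonneg _ _ hp0.le,
      ← ENNReal.rpow_mul, ← ENNReal.rpow_mul] at h2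
    have e1 : 1 / p * p = 1 := by field_simp
    have e2 : (1 - 1 / p) * p = p - 1 := by field_simp
    rwa [e1, e2, ENNReal.rpow_one] at h2
  rw [ENNReal.div_rpow_of_nonneg _ _ hp1, ENNReal.div_rpow_of_nonneg _ _ hp1]
  have hmp0 : m ^ (p - 1) ≠ 0 := (ENNReal.rpow_pos (pos_iff_ne_zero.2 hm) hm').ne'
  have hmpt : m ^ (p - 1) ≠ ⊤ := ENNReal.rpow_ne_top_of_nonneg hp1 hm'
  have hsp0 : s ^ (p - 1) ≠ 0 := (ENNReal.rpow_pos (pos_iff_ne_zero.2 hs) hs').ne'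
  have hspt : s ^ (p - 1) ≠ ⊤ := ENNReal.rpow_ne_top_of_nonneg hp1 hs'
  have hmm : m * m ^ (p - 1) = m ^ p := by
    conv_lhs => enter [1]; rw [← ENNReal.rpow_one m]
    rw [← ENNReal.rpow_add _ _ hm hm']; congr 1; ring
  rw [ENNReal.div_le_iff hmp0 hmpt]
  calc X ^ (p - 1) = X ^ (p - 1) * ((v * s ^ (p - 1)) * (v⁻¹ * (s ^ (p - 1))⁻¹)) := by
        have : (v * s ^ (p - 1)) * (v⁻¹ * (s ^ (p - 1))⁻¹) = 1 := by
          rw [mul_mul_mul_comm, ENNReal.mul_inv_cancel hv hv', ENNReal.mul_inv_cancel hsp0 hspt,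
            one_mul]
        rw [this, mul_one]
    _ ≤ X ^ (p - 1) * ((A ^ p * m ^ p) * (v⁻¹ * (s ^ (p - 1))⁻¹)) := by gcongr
    _ = _ := by
        rw [← hmm, div_eq_mul_inv, div_eq_mul_inv]; ring

lemma lerner_s11 (p : ℝ) (hp : 1 < p) (A : ℝ≥0∞) (hAt : A ≠ ⊤) (m : Measure ℝ) [SFinite m]
    (hm : ∀ b ∈ Ico (0:ℝ) 1, m (Ioo b 1) ≠ 0) (hm' : ∀ b ∈ Ico (0:ℝ) 1, m (Ioo b 1) ≠ ⊤)
    (V : ℝ → ℝ≥0∞) (hVm : Measurable V) (hV0 : ∀ s ∈ Ioo (0:ℝ) 1, V s ≠ 0)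
    (hVt : ∀ s ∈ Ioo (0:ℝ) 1, V s ≠ ⊤)
    (hVi : ∀ b ∈ Ico (0:ℝ) 1, ∫⁻ s in Ioo b 1, V s ∂m ≠ ⊤)
    (hA : ∀ b ∈ Ico (0:ℝ) 1, (∫⁻ s in Ioo b 1, V s ∂m) ^ (1 / p) *
      (∫⁻ s in Ioo b 1, V s ^ (-(1 / (p - 1))) ∂m) ^ (1 - 1 / p) / m (Ioo b 1) ≤ A)
    (g : ℝ → ℝ≥0∞) (hg : Measurable g) :
    ∫⁻ x in Ioo 0 1, Nmax m g x ^ p * V x ∂m ≤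
      (A ^ p) ^ (p / (p - 1)) * ENNReal.ofReal (Cd (p / (p - 1))) * ENNReal.ofReal (Cd p) *
        ∫⁻ x in Ioo 0 1, g x ^ p * V x ∂m := by
  have hp0 : 0 < p := by linarith
  have hp1 : 0 < p - 1 := by linarith
  set S : ℝ → ℝ≥0∞ := fun s => V s ^ (-(1 / (p - 1))) with hS
  have hSm : Measurable S := by fun_prop
  have hS0 : ∀ s ∈ Ioo (0:ℝ) 1, S s ≠ 0 := fun s hs =>
    (ENNReal.rpow_pos (pos_iff_ne_zero.2 (hV0 s hs)) (hVt s hs)).ne'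
  have hSt : ∀ s ∈ Ioo (0:ℝ) 1, S s ≠ ⊤ := fun s hs =>
    ENNReal.rpow_ne_top_of_ne_zero (hV0 s hs) (hVt s hs)
  have hpos : ∀ U : ℝ → ℝ≥0∞, Measurable U → (∀ s ∈ Ioo (0:ℝ) 1, U s ≠ 0) →
      ∀ b ∈ Ico (0:ℝ) 1, ∫⁻ s in Ioo b 1, U s ∂m ≠ 0 := by
    intro U hU hU0 b hb h
    rw [lintegral_eq_zero_iff hU] at h
    have h' : ∀ᵐ s ∂(m.restrict (Ioo b 1)), False := by
      filter_upwards [h, ae_restrict_mem measurableSet_Ioo] with s hs hs'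
      exact hU0 s ⟨hb.1.trans_lt hs'.1, hs'.2⟩ hs
    have := Filter.eventually_false_iff_eq_bot.1 h'
    rw [ae_eq_bot, Measure.restrict_eq_zero] at this
    exact hm b hb this
  have hv0 := hpos V hVm hV0
  have hs0 := hpos S hSm hS0
  have hsi : ∀ b ∈ Ico (0:ℝ) 1, ∫⁻ s in Ioo b 1, S s ∂m ≠ ⊤ := by
    intro b hb h
    have h1 := hA b hb
    have h2 : (0:ℝ) < 1 - 1 / p := by
      have : 1 / p < 1 := by rw [div_lt_one hp0]; exact hp
      linarith
    rw [h, ENNReal.top_rpow_of_pos h2, ENNReal.mul_top, ENNReal.top_div_of_ne_top (hm' b hb)] at h1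
    · exact hAt (top_le_iff.1 h1)
    · exact (ENNReal.rpow_pos (pos_iff_ne_zero.2 (hv0 b hb)) (hVi b hb)).ne'
  set mv := m.withDensity V with hmv
  set ms := m.withDensity S with hms
  have hmvI : ∀ b, mv (Ioo b 1) = ∫⁻ s in Ioo b 1, V s ∂m := fun b =>
    withDensity_apply _ measurableSet_Ioo
  have hmsI : ∀ b, ms (Ioo b 1) = ∫⁻ s in Ioo b 1, S s ∂m := fun b =>
    withDensity_apply _ measurableSet_Ioo
  set G : ℝ → ℝ≥0∞ := fun s => g s / S s with hG
  have hGm : Measurable G := by fun_prop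
  set h : ℝ → ℝ≥0∞ := fun s => Nmax ms G s ^ (p - 1) * (V s)⁻¹ with hh
  have hNm := Nmax_meas ms G
  have hhm : Measurable h := by fun_prop
  -- pointwise
  have hpt : ∀ x ∈ Ioo (0:ℝ) 1, Nmax m g x ^ p ≤
      (A ^ p) ^ (p / (p - 1)) * Nmax mv h x ^ (p / (p - 1)) := by
    intro x hx
    have key : ∀ b ∈ Ico (0:ℝ) x, (∫⁻ s in Ioo b 1, g s ∂m) / m (Ioo b 1) ≤
        (A ^ p * Nmax mv h x) ^ (1 / (p - 1)) := by
      intro b hb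
      have hb1 : b ∈ Ico (0:ℝ) 1 := ⟨hb.1, hb.2.trans hx.2⟩
      have hgG : ∫⁻ s in Ioo b 1, G s ∂ms = ∫⁻ s in Ioo b 1, g s ∂m := by
        rw [hms, setLIntegral_withDensity_eq_setLIntegral_mul _ hSm hGm measurableSet_Ioo]
        refine setLIntegral_congr_fun measurableSet_Ioo fun s hs => ?_
        have hs' : s ∈ Ioo (0:ℝ) 1 := ⟨hb.1.trans_lt hs.1, hs.2⟩
        exact ENNReal.mul_div_cancel (hS0 s hs') (hSt s hs')
      have hle : m (Ioo b 1) / mv (Ioo b 1) *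
          ((∫⁻ s in Ioo b 1, g s ∂m) / ms (Ioo b 1)) ^ (p - 1) ≤ Nmax mv h x := by
        refine le_trans ?_ (le_iSup₂ (f := fun b (_ : b ∈ Ico (0:ℝ) x) =>
            (∫⁻ s in Ioo b 1, h s ∂mv) / mv (Ioo b 1)) b hb)
        have : ((∫⁻ s in Ioo b 1, g s ∂m) / ms (Ioo b 1)) ^ (p - 1) * m (Ioo b 1) ≤
            ∫⁻ s in Ioo b 1, h s ∂mv := by
          rw [hmv, setLIntegral_withDensity_eq_setLIntegral_mul _ hVm hhm measurableSet_Ioo,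
            ← setLIntegral_const]
          refine setLIntegral_mono' measurableSet_Ioo fun s hs => ?_
          have hs' : s ∈ Ioo (0:ℝ) 1 := ⟨hb.1.trans_lt hs.1, hs.2⟩
          have e : (V * h) s = Nmax ms G s ^ (p - 1) := by
            simp only [Pi.mul_apply, hh]
            rw [mul_left_comm, ENNReal.mul_inv_cancel (hV0 s hs') (hVt s hs'), mul_one]
          rw [e]
          refine ENNReal.rpow_le_rpow ?_ hp1.le
          rw [← hgG]
          exact le_iSup₂ (f := fun b (_ : b ∈ Ico (0:ℝ) s) =>
            (∫⁻ s in Ioo b 1, G s ∂ms) / ms (Ioo b 1)) b ⟨hb.1, hs.1⟩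
        calc _ = ((∫⁻ s in Ioo b 1, g s ∂m) / ms (Ioo b 1)) ^ (p - 1) * m (Ioo b 1)
              / mv (Ioo b 1) := by rw [div_eq_mul_inv, div_eq_mul_inv _ (mv _)]; ring
          _ ≤ _ := by gcongr
      have ha := alg_aux p hp A (∫⁻ s in Ioo b 1, g s ∂m) (m (Ioo b 1)) (mv (Ioo b 1))
        (ms (Ioo b 1)) (hm b hb1) (hm' b hb1) (by rw [hmvI]; exact hv0 b hb1)
        (by rw [hmvI]; exact hVi b hb1) (by rw [hmsI]; exact hs0 b hb1)
        (by rw [hmsI]; exact hsi b hb1) (by rw [hmvI, hmsI]; exact hA b hb1)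
      rw [one_div, ENNReal.le_rpow_inv_iff hp1]
      exact ha.trans (by gcongr)
    have h1 : Nmax m g x ≤ (A ^ p * Nmax mv h x) ^ (1 / (p - 1)) := iSup₂_le key
    have h2 := ENNReal.rpow_le_rpow h1 hp0.le
    rw [← ENNReal.rpow_mul, ENNReal.mul_rpow_of_nonneg _ _ (by positivity)] at h2
    have e : 1 / (p - 1) * p = p / (p - 1) := by ring
    rwa [e] at h2
  have hq : 1 < p / (p - 1) := by rw [lt_div_iff₀ hp1]; linarith
  have hNm2 := Nmax_meas mv h
  have hNm3 := Nmax_meas m g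
  have hcv : ∀ F : ℝ → ℝ≥0∞, Measurable F → ∫⁻ s in Ioo 0 1, F s ∂mv =
      ∫⁻ s in Ioo 0 1, F s * V s ∂m := by
    intro F hF
    rw [hmv, setLIntegral_withDensity_eq_setLIntegral_mul _ hVm hF measurableSet_Ioo]
    simp only [Pi.mul_apply, mul_comm]
  have hcs : ∀ F : ℝ → ℝ≥0∞, Measurable F → ∫⁻ s in Ioo 0 1, F s ∂ms =
      ∫⁻ s in Ioo 0 1, F s * S s ∂m := by
    intro F hF
    rw [hms, setLIntegral_withDensity_eq_setLIntegral_mul _ hSm hF measurableSet_Ioo]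
    simp only [Pi.mul_apply, mul_comm]
  have d1 := doob (p / (p - 1)) hq mv h hhm
  have d2 := doob p hp ms G hGm
  have e1 : ∫⁻ x in Ioo 0 1, h x ^ (p / (p - 1)) ∂mv = ∫⁻ x in Ioo 0 1, Nmax ms G x ^ p ∂ms := by
    rw [hcv _ (by fun_prop), hcs _ (by fun_prop)]
    refine setLIntegral_congr_fun measurableSet_Ioo fun s hs => ?_
    simp only [hh, hS]
    rw [ENNReal.mul_rpow_of_nonneg _ _ (by positivity), ← ENNReal.rpow_mul, mul_assoc]
    have e : (p - 1) * (p / (p - 1)) = p := by field_simp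
    rw [e]
    congr 1
    rw [← ENNReal.rpow_neg_one, ← ENNReal.rpow_mul]
    conv_lhs => enter [2]; rw [← ENNReal.rpow_one (V s)]
    rw [← ENNReal.rpow_add _ _ (hV0 s hs) (hVt s hs)]
    congr 1
    field_simp
    ring
  have e2 : ∫⁻ x in Ioo 0 1, G x ^ p ∂ms = ∫⁻ x in Ioo 0 1, g x ^ p * V x ∂m := by
    rw [hcs _ (by fun_prop)]
    refine setLIntegral_congr_fun measurableSet_Ioo fun s hs => ?_
    simp only [hG]
    rw [ENNReal.div_rpow_of_nonneg _ _ hp0.le, div_eq_mul_inv, mul_assoc]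
    congr 1
    simp only [hS]
    rw [← ENNReal.rpow_mul, ← ENNReal.rpow_neg, ← ENNReal.rpow_add _ _ (hV0 s hs) (hVt s hs)]
    conv_rhs => rw [← ENNReal.rpow_one (V s)]
    congr 1
    field_simp
    ring
  calc ∫⁻ x in Ioo 0 1, Nmax m g x ^ p * V x ∂m
      = ∫⁻ x in Ioo 0 1, Nmax m g x ^ p ∂mv := (hcv _ (by fun_prop)).symm
    _ ≤ ∫⁻ x in Ioo 0 1, (A ^ p) ^ (p / (p - 1)) * Nmax mv h x ^ (p / (p - 1)) ∂mv :=
        setLIntegral_mono' measurableSet_Ioo hpt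
    _ = (A ^ p) ^ (p / (p - 1)) * ∫⁻ x in Ioo 0 1, Nmax mv h x ^ (p / (p - 1)) ∂mv :=
        lintegral_const_mul _ (by fun_prop)
    _ ≤ (A ^ p) ^ (p / (p - 1)) * (ENNReal.ofReal (Cd (p / (p - 1))) *
          (ENNReal.ofReal (Cd p) * ∫⁻ x in Ioo 0 1, g x ^ p * V x ∂m)) := by
        gcongr
        refine d1.trans ?_
        gcongr
        rw [e1, ← e2]
        exact d2
    _ = _ := by ring

/-- Polar parametrization. -/
def Epol (r θ : ℝ) : ℂ := (r : ℂ) * ((Real.cos θ : ℂ) + (Real.sin θ : ℂ) * Complex.I)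

lemma Epol_norm (r θ : ℝ) (hr : 0 ≤ r) : ‖Epol r θ‖ = r := by
  unfold Epol
  rw [norm_mul, Complex.norm_real, Real.norm_of_nonneg hr, Complex.ofReal_cos, Complex.ofReal_sin,
    Complex.norm_cos_add_sin_mul_I, mul_one]

lemma Epol_smul (r s θ : ℝ) (hr : 0 < r) : (s / r) • Epol r θ = Epol s θ := by
  unfold Epol
  rw [Complex.real_smul, ← mul_assoc]
  congr 1
  rw [← Complex.ofReal_mul]
  congr 1
  field_simp

lemma Epol_meas : Measurable (fun z : ℝ × ℝ => Epol z.1 z.2) := by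
  unfold Epol
  fun_prop

lemma polar_ball (F : ℂ → ℝ≥0∞) :
    ∫⁻ z in Metric.ball (0:ℂ) 1, F z =
      ∫⁻ z, ENNReal.ofReal z.2 * F (Epol z.2 z.1)
        ∂((volume.restrict (Ioo (-Real.pi) Real.pi)).prod (volume.restrict (Ioo (0:ℝ) 1))) := by
  have e : ∫⁻ z, ENNReal.ofReal z.2 * F (Epol z.2 z.1)
        ∂((volume.restrict (Ioo (-Real.pi) Real.pi)).prod (volume.restrict (Ioo (0:ℝ) 1))) =
      ∫⁻ z, ENNReal.ofReal z.1 * F (Epol z.1 z.2)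
        ∂((volume.restrict (Ioo (0:ℝ) 1)).prod (volume.restrict (Ioo (-Real.pi) Real.pi))) :=
    lintegral_prod_swap (fun z : ℝ × ℝ => ENNReal.ofReal z.1 * F (Epol z.1 z.2))
  rw [e, ← lintegral_indicator measurableSet_ball, ← Complex.lintegral_comp_polarCoord_symm,
    Measure.prod_restrict, ← Measure.volume_eq_prod]
  have ht : polarCoord.target = Ioi (0:ℝ) ×ˢ Ioo (-Real.pi) Real.pi := rfl
  have hm1 : MeasurableSet (Ioi (0:ℝ) ×ˢ Ioo (-Real.pi) Real.pi) :=
    measurableSet_Ioi.prod measurableSet_Ioo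
  have hm2 : MeasurableSet (Ioo (0:ℝ) 1 ×ˢ Ioo (-Real.pi) Real.pi) :=
    measurableSet_Ioo.prod measurableSet_Ioo
  rw [ht, ← lintegral_indicator hm1, ← lintegral_indicator hm2]
  refine lintegral_congr fun z => ?_
  have hz : (Complex.polarCoord.symm z) = Epol z.1 z.2 := by
    rw [Complex.polarCoord_symm_apply]; rfl
  by_cases h0 : 0 < z.1
  · by_cases h1 : z.1 < 1 <;> by_cases h2 : z.2 ∈ Ioo (-Real.pi) Real.pi <;>
      simp [indicator, hz, h0, h1, h2, Epol_norm _ _ h0.le, -mem_Ioo]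
    · simp [h0, h1, mem_Ioo]
    · exact fun h => absurd h.2 h1
  · simp [indicator, h0]

/-- Let `1 < p < ∞`. If `A_p(ω,ων) < ∞`, then `M_{ω₁,rad}` is bounded on
`L^p_{ων}` with a constant depending only on `p` and (an upper bound `A` for) `A_p(ω,ων)`. -/
theorem maximal_bounded_of_Ap (p A : ℝ) (hp : 1 < p) (hA : 0 < A) :
    ∃ C > (0:ℝ), ∀ w v : ℝ → ℝ,
      IsRadialWeight w → Measurable v → (∀ s ∈ Set.Ico (0:ℝ) 1, 0 < v s) →
      MeasureTheory.IntegrableOn (fun s => v s * w s) (Set.Ico (0:ℝ) 1) →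
      Ap2 p w v ≤ ENNReal.ofReal A →
      ∀ f : ℂ → ℝ, Measurable f → LpR p (fun s => w s * v s) f < ⊤ →
        LpE p (fun s => w s * v s) (MradE w f) ≤
          ENNReal.ofReal C * LpR p (fun s => w s * v s) f := by
  set K : ℝ≥0∞ := (ENNReal.ofReal A ^ p) ^ (p / (p - 1)) *
    ENNReal.ofReal (Cd (p / (p - 1))) * ENNReal.ofReal (Cd p) with hK
  have hp0 : 0 < p := by linarith
  have hp1 : 0 < p - 1 := by linarith
  have hKt : K ≠ ⊤ := by
    refine ENNReal.mul_ne_top (ENNReal.mul_ne_top ?_ ENNReal.ofReal_ne_top) ENNReal.ofReal_ne_top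
    exact ENNReal.rpow_ne_top_of_nonneg (by positivity)
      (ENNReal.rpow_ne_top_of_nonneg hp0.le ENNReal.ofReal_ne_top)
  have hKp : K ^ (1 / p) ≠ ⊤ := ENNReal.rpow_ne_top_of_nonneg (by positivity) hKt
  refine ⟨(K ^ (1 / p)).toReal + 1, by positivity, ?_⟩
  rintro w v ⟨hw0, hwi, hwpos⟩ hvm hv0 hvw hAp f hf -
  -- the measure
  set D : ℝ → ℝ≥0∞ := fun s => ENNReal.ofReal (s * w s) with hD
  have hwm : AEMeasurable w (volume.restrict (Ioo 0 1)) :=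
    (hwi.mono_set Ioo_subset_Ico_self).aemeasurable
  have hDm : AEMeasurable D (volume.restrict (Ioo 0 1)) := by fun_prop
  set m : Measure ℝ := (volume.restrict (Ioo 0 1)).withDensity D with hmdef
  have hmI : ∀ F : ℝ → ℝ≥0∞, Measurable F → ∀ b ∈ Ico (0:ℝ) 1,
      ∫⁻ s in Ioo b 1, F s ∂m = ∫⁻ s in Ioo b 1, D s * F s := by
    intro F hF b hb
    have hsub : Ioo b 1 ⊆ Ioo (0:ℝ) 1 := Ioo_subset_Ioo_left hb.1
    rw [hmdef, restrict_withDensity measurableSet_Ioo, Measure.restrict_restrict measurableSet_Ioo,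
      inter_eq_left.2 hsub, lintegral_withDensity_eq_lintegral_mul₀
        (hDm.mono_measure (Measure.restrict_mono hsub le_rfl)) hF.aemeasurable]
    rfl
  have hmb : ∀ b ∈ Ico (0:ℝ) 1, m (Ioo b 1) = ENNReal.ofReal (hat1 w b) := by
    intro b hb
    have h1 := hmI (fun _ => 1) measurable_const b hb
    simp only [lintegral_const, one_mul, mul_one, Measure.restrict_apply MeasurableSet.univ,
      univ_inter] at h1
    rw [h1, hat1, ofReal_integral_eq_lintegral_ofReal]
    · have hwi' : IntegrableOn w (Ioo b 1) :=
        hwi.mono_set (fun s hs => ⟨hb.1.trans hs.1.le, hs.2⟩)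
      refine Integrable.mono' hwi' ?_ ?_
      · exact (measurable_id.aestronglyMeasurable).mul hwi'.aestronglyMeasurable
      · filter_upwards [ae_restrict_mem measurableSet_Ioo] with s hs
        have hs0 : 0 ≤ s := hb.1.trans hs.1.le
        have hws := hw0 s ⟨hs0, hs.2⟩
        rw [Real.norm_of_nonneg (by positivity)]
        exact mul_le_of_le_one_left hws hs.2.le
    · filter_upwards [ae_restrict_mem measurableSet_Ioo] with s hs
      have hs0 : 0 ≤ s := hb.1.trans hs.1.le
      exact mul_nonneg hs0 (hw0 s ⟨hs0, hs.2⟩)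
  have hm0 : ∀ b ∈ Ico (0:ℝ) 1, m (Ioo b 1) ≠ 0 := by
    intro b hb h
    have h1 := hmI (fun _ => 1) measurable_const b hb
    simp only [lintegral_const, one_mul, mul_one, Measure.restrict_apply MeasurableSet.univ,
      univ_inter] at h1
    rw [h] at h1
    have hsub : Ioo b 1 ⊆ Ioo (0:ℝ) 1 := Ioo_subset_Ioo_left hb.1
    have h2 := (lintegral_eq_zero_iff'
      (hDm.mono_measure (Measure.restrict_mono hsub le_rfl))).1 h1.symm
    have h3 : hatw w b = 0 := by
      unfold hatw
      refine integral_eq_zero_of_ae ?_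
      filter_upwards [h2, ae_restrict_mem measurableSet_Ioo] with s hs hs'
      have hs0 : 0 < s := hb.1.trans_lt hs'.1
      have hws := hw0 s ⟨hs0.le, hs'.2⟩
      simp only [hD, Pi.zero_apply, ENNReal.ofReal_eq_zero] at hs ⊢
      nlinarith
    exact (hwpos b hb).ne' h3
  have hmt : ∀ b ∈ Ico (0:ℝ) 1, m (Ioo b 1) ≠ ⊤ := fun b hb => by
    rw [hmb b hb]; exact ENNReal.ofReal_ne_top
  -- the weight
  set V : ℝ → ℝ≥0∞ := fun s => ENNReal.ofReal (v s) with hV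
  have hVm : Measurable V := by fun_prop
  have hVI : ∀ b ∈ Ico (0:ℝ) 1, ∫⁻ s in Ioo b 1, V s ∂m =
      ∫⁻ s in Ioo b 1, ENNReal.ofReal (s * w s * v s) := by
    intro b hb
    rw [hmI V hVm b hb]
    refine setLIntegral_congr_fun measurableSet_Ioo fun s hs => ?_
    have hs0 : 0 ≤ s := hb.1.trans hs.1.le
    exact (ENNReal.ofReal_mul (mul_nonneg hs0 (hw0 s ⟨hs0, hs.2⟩))).symm
  have hSI : ∀ b ∈ Ico (0:ℝ) 1, ∫⁻ s in Ioo b 1, V s ^ (-(1 / (p - 1))) ∂m =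
      ∫⁻ s in Ioo b 1, ENNReal.ofReal (s * w s * v s ^ (-(p / (p - 1)) / p)) := by
    intro b hb
    rw [hmI _ (by fun_prop) b hb]
    refine setLIntegral_congr_fun measurableSet_Ioo fun s hs => ?_
    have hs0 : 0 ≤ s := hb.1.trans hs.1.le
    have e : -(p / (p - 1)) / p = -(1 / (p - 1)) := by field_simp
    simp only [e, hV]
    rw [ENNReal.ofReal_mul (mul_nonneg hs0 (hw0 s ⟨hs0, hs.2⟩)),
      ENNReal.ofReal_rpow_of_pos (hv0 s ⟨hs0, hs.2⟩)]
  have hVi : ∀ b ∈ Ico (0:ℝ) 1, ∫⁻ s in Ioo b 1, V s ∂m ≠ ⊤ := by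
    intro b hb
    rw [hVI b hb]
    have hvw' : IntegrableOn (fun s => v s * w s) (Ioo b 1) :=
      hvw.mono_set (fun s hs => ⟨hb.1.trans hs.1.le, hs.2⟩)
    refine ne_top_of_le_ne_top hvw'.lintegral_lt_top.ne ?_
    refine setLIntegral_mono' measurableSet_Ioo fun s hs => ?_
    have hs0 : 0 ≤ s := hb.1.trans hs.1.le
    have hws := hw0 s ⟨hs0, hs.2⟩
    have hvs := hv0 s ⟨hs0, hs.2⟩
    apply ENNReal.ofReal_le_ofReal
    have := mul_nonneg hws hvs.le
    nlinarith [hs.2]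
  have hA' : ∀ b ∈ Ico (0:ℝ) 1, (∫⁻ s in Ioo b 1, V s ∂m) ^ (1 / p) *
      (∫⁻ s in Ioo b 1, V s ^ (-(1 / (p - 1))) ∂m) ^ (1 - 1 / p) / m (Ioo b 1) ≤
      ENNReal.ofReal A := by
    intro b hb
    rw [hVI b hb, hSI b hb, hmb b hb]
    refine le_trans ?_ hAp
    exact le_iSup₂ (f := fun r (_ : r ∈ Ico (0:ℝ) 1) =>
      (∫⁻ s in Set.Ioo r 1, ENNReal.ofReal (s * w s * v s)) ^ (1 / p) *
      (∫⁻ s in Set.Ioo r 1,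
        ENNReal.ofReal (s * w s * v s ^ (-(p / (p - 1)) / p))) ^ (1 - 1 / p) /
      ENNReal.ofReal (hat1 w r)) b hb
  -- the radial functions
  set g : ℝ → ℝ → ℝ≥0∞ := fun θ s => ENNReal.ofReal |f (Epol s θ)| with hg
  have hgm : ∀ θ, Measurable (g θ) := by
    intro θ
    have h1 : Measurable (fun s => Epol s θ) :=
      Epol_meas.comp (measurable_id.prodMk measurable_const)
    exact ENNReal.measurable_ofReal.comp (hf.comp h1).abs
  have hM : ∀ θ, ∀ r ∈ Ioo (0:ℝ) 1, MradE w f (Epol r θ) = Nmax m (g θ) r := by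
    intro θ r hr
    unfold MradE Nmax
    rw [Epol_norm r θ hr.1.le]
    refine iSup_congr fun b => iSup_congr fun hb => ?_
    have hb1 : b ∈ Ico (0:ℝ) 1 := ⟨hb.1, hb.2.trans hr.2⟩
    rw [hmb b hb1, hmI _ (hgm θ) b hb1]
    congr 1
    refine setLIntegral_congr_fun measurableSet_Ioo fun s hs => ?_
    simp only [Epol_smul r s θ hr.1, hg, hD]
    rw [ENNReal.ofReal_mul (abs_nonneg _), mul_comm]
  have hm01 : ∀ F : ℝ → ℝ≥0∞, Measurable F → ∫⁻ s in Ioo 0 1, F s ∂m =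
      ∫⁻ s in Ioo 0 1, D s * F s := fun F hF => hmI F hF 0 ⟨le_rfl, one_pos⟩
  have hmain : ∫⁻ z in Metric.ball (0:ℂ) 1, MradE w f z ^ p * ENNReal.ofReal (w ‖z‖ * v ‖z‖) ≤
      K * ∫⁻ z in Metric.ball (0:ℂ) 1, ENNReal.ofReal (|f z| ^ p * (w ‖z‖ * v ‖z‖)) := by
    rw [polar_ball, polar_ball]
    have hR : ∫⁻ z, ENNReal.ofReal z.2 * ENNReal.ofReal (|f (Epol z.2 z.1)| ^ p *
          (w ‖Epol z.2 z.1‖ * v ‖Epol z.2 z.1‖))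
        ∂((volume.restrict (Ioo (-Real.pi) Real.pi)).prod (volume.restrict (Ioo (0:ℝ) 1))) =
        ∫⁻ θ in Ioo (-Real.pi) Real.pi, ∫⁻ r in Ioo (0:ℝ) 1,
          ENNReal.ofReal r * ENNReal.ofReal (|f (Epol r θ)| ^ p *
          (w ‖Epol r θ‖ * v ‖Epol r θ‖)) := by
      rw [lintegral_prod]
      have hE : Measurable (fun z : ℝ × ℝ => Epol z.2 z.1) := Epol_meas.comp measurable_swap
      have h1 : Measurable (fun z : ℝ × ℝ => |f (Epol z.2 z.1)| ^ p) :=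
        (hf.comp hE).abs.pow_const p
      have h2 : AEMeasurable (fun z : ℝ × ℝ => w z.2)
          ((volume.restrict (Ioo (-Real.pi) Real.pi)).prod (volume.restrict (Ioo (0:ℝ) 1))) :=
        hwm.comp_quasiMeasurePreserving Measure.quasiMeasurePreserving_snd
      have h3 : AEMeasurable (fun z : ℝ × ℝ => ENNReal.ofReal z.2 *
          ENNReal.ofReal (|f (Epol z.2 z.1)| ^ p * (w z.2 * v z.2)))
          ((volume.restrict (Ioo (-Real.pi) Real.pi)).prod (volume.restrict (Ioo (0:ℝ) 1))) := by
        have h4 : Measurable (fun z : ℝ × ℝ => v z.2) := hvm.comp measurable_snd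
        exact (ENNReal.measurable_ofReal.comp measurable_snd).aemeasurable.mul
          (h1.aemeasurable.mul (h2.mul h4.aemeasurable)).ennreal_ofReal
      refine h3.congr ?_
      rw [Measure.prod_restrict]
      filter_upwards [ae_restrict_mem ((measurableSet_Ioo (a := -Real.pi) (b := Real.pi)).prod
        (measurableSet_Ioo (a := (0:ℝ)) (b := 1)))] with z hz
      rw [Epol_norm _ _ hz.2.1.le]
    rw [hR, ← lintegral_const_mul' _ _ hKt]
    refine (lintegral_prod_le _).trans ?_
    refine lintegral_mono fun θ => ?_
    have hl := lerner_s11 p hp (ENNReal.ofReal A) ENNReal.ofReal_ne_top m hm0 hmt V hVm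
      (fun s hs => by
        have := hv0 s ⟨hs.1.le, hs.2⟩
        simpa [hV] using this)
      (fun s _ => ENNReal.ofReal_ne_top) hVi hA' (g θ) (hgm θ)
    have hNm := Nmax_meas m (g θ)
    have hgt := hgm θ
    rw [← hK, hm01 _ (by fun_prop), hm01 _ (by fun_prop)] at hl
    refine (le_of_eq ?_).trans (hl.trans (le_of_eq ?_))
    · refine setLIntegral_congr_fun measurableSet_Ioo fun r hr => ?_
      have hwr := hw0 r ⟨hr.1.le, hr.2⟩
      simp only [hM θ r hr, Epol_norm r θ hr.1.le, hD, hV]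
      rw [ENNReal.ofReal_mul hwr, ENNReal.ofReal_mul hr.1.le]
      ring
    · congr 1
      refine setLIntegral_congr_fun measurableSet_Ioo fun r hr => ?_
      have hwr := hw0 r ⟨hr.1.le, hr.2⟩
      simp only [Epol_norm r θ hr.1.le, hD, hV, hg]
      have hfp : 0 ≤ |f (Epol r θ)| ^ p := by positivity
      rw [ENNReal.ofReal_mul hfp, ENNReal.ofReal_mul hwr, ENNReal.ofReal_mul hr.1.le,
        ENNReal.ofReal_rpow_of_nonneg (abs_nonneg _) hp0.le]
      ring
  unfold LpE LpR
  calc _ ≤ ((K * ∫⁻ z in Metric.ball (0:ℂ) 1, ENNReal.ofReal (|f z| ^ p * (w ‖z‖ * v ‖z‖))) /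
        ENNReal.ofReal Real.pi) ^ (1 / p) := by gcongr
    _ = K ^ (1 / p) * ((∫⁻ z in Metric.ball (0:ℂ) 1,
        ENNReal.ofReal (|f z| ^ p * (w ‖z‖ * v ‖z‖))) / ENNReal.ofReal Real.pi) ^ (1 / p) := by
        rw [mul_div_assoc, ENNReal.mul_rpow_of_nonneg _ _ (by positivity)]
    _ ≤ _ := by
        gcongr
        conv_lhs => rw [← ENNReal.ofReal_toReal hKp]
        exact ENNReal.ofReal_le_ofReal (by linarith)

end
end
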